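/- Let {X_i}_{i=-infinity}^infinity be a strictly stationary beta-mixing sequence taking values in a measurable space, and let Xi_{i,n} = Xi_n(X_i) where Xi_n is a measurable d1 x d2 real-matrix-valued function. Assume E[Xi_{i,n}] = 0 and ||Xi_{i,n}|| <= R_n for each i, and define s_n^2 = max_{1 <= i, j <= n} max{ ||E[Xi_{i,n} Xi_{j,n}']||, ||E[Xi_{i,n}' Xi_{j,n}]|| }. Let q be an integer with 1 <= q <= n/2, and let I_r = { q*floor(n/q) + 1, ..., n } when q*floor(n/q) < n and I_r be empty when q*floor(n/q) = n (with the convention that the norm of an empty sum is 0). Then for all t >= 0: P( || sum_{i=1}^n Xi_{i,n} || >= 6t ) <= (n/q) * beta(q) + P( || sum_{i in I_r} Xi_{i,n} || >= t ) + 2 (d1 + d2) * exp( -(t^2/2) / ( n q s_n^2 + q R_n t / 3 ) ). -/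

import Mathlib

/-!
The sum over `1, …, n` splits into `n / q` consecutive blocks of length `q` and a remainder. The
even-numbered blocks are separated by gaps of length `q`, and so are the odd-numbered ones. A
spectral norm of at least `6 t` therefore forces the remainder to have norm at least `t`, or one of
the two families of blocks to have norm at least `2 t` (even with a margin of `t` to spare).

Within one family the blocks are compared with independent copies. Instead of a coupling, the
comparison is made on laws: by approximation with unions of rectangles, the joint law of a
past-measurable and a future-measurable variable exceeds the product of its marginals by at most
the β-mixing coefficient on every measurable set (`prob_le_prod_add_betaCoef`). Peeling off one
block at a time, with stationarity moving the cut to time zero, bounds the law of a family of `j`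
blocks by the `j`-th convolution power of the law of one block plus `j β(q)`
(`altSum_le_convPow`). The two families have `n / q` blocks in total.

For the convolution power the matrix Laplace transform method applies to the self-adjoint dilation
of the matrices. Golden–Thompson (`golden_thompson`, obtained from iterated Cauchy–Schwarz for
traces and the Lie product formula) splits off one summand at a time, and `exp A ≤ 1 + A + A²` for
`‖A‖ ≤ 1` averages it out (`laplace_step`). A block has norm at most `q R` and variance at most
`q² s2`, and `θ = t / (3 D)`, with `D = n q s2 + q R t / 3`, gives the exponent `-(t² / 2) / D`
(`exponent_le`).
-/

noncomputable section
open Matrix MeasureTheory ProbabilityTheory Filter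

/-- Euclidean norm on ℝ^K. -/
def eucNorm {K : ℕ} (v : Fin K → ℝ) : ℝ := Real.sqrt (∑ k, v k ^ 2)

/-- Spectral norm (largest singular value) of a real matrix. -/
def specNorm {m n : ℕ} (A : Matrix (Fin m) (Fin n) ℝ) : ℝ :=
  sSup {r | ∃ v : Fin n → ℝ, eucNorm v ≤ 1 ∧ r = eucNorm (A.mulVec v)}

/-- The β-mixing (absolute regularity) coefficient between two sub-σ-algebras:
`2 β(A,B) = sup ∑_{i,j} |P(Aᵢ ∩ Bⱼ) - P(Aᵢ)P(Bⱼ)|`, the supremum over finite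
measurable partitions `{Aᵢ} ⊆ A` and `{Bⱼ} ⊆ B` of the sample space. -/
def betaCoef {Ω : Type} [MeasurableSpace Ω] (P : Measure Ω)
    (mA mB : MeasurableSpace Ω) : ℝ :=
  sSup {r | ∃ (I J : ℕ) (A : Fin I → Set Ω) (B : Fin J → Set Ω),
    (∀ i, MeasurableSet[mA] (A i)) ∧ (∀ j, MeasurableSet[mB] (B j)) ∧
    Pairwise (Function.onFun Disjoint A) ∧ Pairwise (Function.onFun Disjoint B) ∧
    (⋃ i, A i) = Set.univ ∧ (⋃ j, B j) = Set.univ ∧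
    2 * r = ∑ i, ∑ j,
      |(P (A i ∩ B j)).toReal - (P (A i)).toReal * (P (B j)).toReal|}

/-- The q-th β-mixing coefficient of a process `X`:
`β(q) = β(σ(…,X₋₁,X₀), σ(X_q,X_{q+1},…))`. -/
def processBeta {Ω E : Type} [MeasurableSpace Ω] [MeasurableSpace E]
    (P : Measure Ω) (X : ℤ → Ω → E) (q : ℕ) : ℝ :=
  betaCoef P
    (⨆ i : {i : ℤ // i ≤ 0}, MeasurableSpace.comap (X i.1) inferInstance)
    (⨆ i : {i : ℤ // (q : ℤ) ≤ i}, MeasurableSpace.comap (X i.1) inferInstance)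

/-! ### The Golden–Thompson inequality -/

section
open scoped Matrix.Norms.L2Operator MatrixOrder

variable {ι : Type*} [Fintype ι] [DecidableEq ι]

lemma trace_mul_pow_comm (A B : Matrix ι ι ℝ) (k : ℕ) :
    ((A * B) ^ k).trace = ((B * A) ^ k).trace := by
  cases k with
  | zero => simp
  | succ k =>
    have h : ∀ k : ℕ, (A * B) ^ k * A = A * (B * A) ^ k := by
      intro k
      induction k with
      | zero => simp
      | succ k ih => rw [pow_succ', Matrix.mul_assoc, ih, pow_succ']; simp only [Matrix.mul_assoc]
    rw [pow_succ, ← Matrix.mul_assoc, h, Matrix.mul_assoc, Matrix.trace_mul_comm, pow_succ,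
      Matrix.mul_assoc]

omit [DecidableEq ι] in
lemma trace_mul_sq_le (A B : Matrix ι ι ℝ) :
    (A * B).trace ^ 2 ≤ (Aᵀ * A).trace * (B * Bᵀ).trace := by
  have h1 : (A * B).trace = ∑ p : ι × ι, A p.1 p.2 * B p.2 p.1 := by
    simp [Matrix.trace, Matrix.mul_apply, Fintype.sum_prod_type]
  have h2 : (Aᵀ * A).trace = ∑ p : ι × ι, A p.1 p.2 ^ 2 := by
    simp only [Matrix.trace, Matrix.mul_apply, Fintype.sum_prod_type, Matrix.diag_apply,
      Matrix.transpose_apply, sq]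
    rw [Finset.sum_comm]
  have h3 : (B * Bᵀ).trace = ∑ p : ι × ι, B p.2 p.1 ^ 2 := by
    simp only [Matrix.trace, Matrix.mul_apply, Fintype.sum_prod_type, Matrix.diag_apply,
      Matrix.transpose_apply, sq]
    rw [Finset.sum_comm]
  rw [h1, h2, h3]
  exact Finset.sum_mul_sq_le_sq_mul_sq _ _ _

/-- Cauchy–Schwarz for the Hilbert–Schmidt inner product, iterated: the two factors produced at
stage `k` have the same trace after cyclic permutation, so the stage can be repeated. -/
lemma trace_mul_pow_sq_le (k : ℕ) : ∀ A B : Matrix ι ι ℝ,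
    ((A * B) ^ 2 ^ k).trace ^ 2 ≤ ((Aᵀ * A) ^ 2 ^ k).trace * ((B * Bᵀ) ^ 2 ^ k).trace := by
  induction k with
  | zero => intro A B; simpa using trace_mul_sq_le A B
  | succ k ih =>
    intro A B
    have e : ∀ C : Matrix ι ι ℝ, C ^ 2 ^ (k + 1) = (C * C) ^ 2 ^ k := by
      intro C; rw [pow_succ', pow_mul, sq]
    rw [e, e, e]
    refine (ih (A * B) (A * B)).trans ?_
    have h1 : (((A * B)ᵀ * (A * B)) ^ 2 ^ k).trace = ((Aᵀ * A * (B * Bᵀ)) ^ 2 ^ k).trace := by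
      rw [Matrix.transpose_mul, Matrix.mul_assoc, trace_mul_pow_comm]
      simp only [Matrix.mul_assoc]
    have h2 : (((A * B) * (A * B)ᵀ) ^ 2 ^ k).trace = ((Aᵀ * A * (B * Bᵀ)) ^ 2 ^ k).trace := by
      rw [Matrix.transpose_mul, ← Matrix.mul_assoc, trace_mul_pow_comm]
      simp only [Matrix.mul_assoc]
    rw [h1, h2, ← sq]
    refine (ih (Aᵀ * A) (B * Bᵀ)).trans ?_
    simp

/-- Araki–Lieb–Thirring inequality for dyadic powers. The symmetry of `X` and `Y` turns the
Cauchy–Schwarz bound `trace_mul_pow_sq_le` into a doubling step. -/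
lemma trace_mul_pow_le (k : ℕ) : ∀ X Y : Matrix ι ι ℝ, Xᵀ = X → Yᵀ = Y →
    ((X * Y) ^ 2 ^ k).trace ≤ (X ^ 2 ^ k * Y ^ 2 ^ k).trace := by
  induction k with
  | zero => intro X Y _ _; simp
  | succ k ih =>
    intro X Y hX hY
    have e : ∀ C : Matrix ι ι ℝ, C ^ 2 ^ (k + 1) = (C * C) ^ 2 ^ k := by
      intro C; rw [pow_succ', pow_mul, sq]
    rw [e (X * Y), e X, e Y]
    refine le_trans ?_ (ih (X * X) (Y * Y) (by simp [hX]) (by simp [hY]))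
    have h := trace_mul_pow_sq_le k (X * Y) (X * Y)
    have h1 : (((X * Y)ᵀ * (X * Y)) ^ 2 ^ k).trace = ((X * X * (Y * Y)) ^ 2 ^ k).trace := by
      rw [Matrix.transpose_mul, hX, hY, Matrix.mul_assoc, trace_mul_pow_comm]
      simp only [Matrix.mul_assoc]
    have h2 : (((X * Y) * (X * Y)ᵀ) ^ 2 ^ k).trace = ((X * X * (Y * Y)) ^ 2 ^ k).trace := by
      rw [Matrix.transpose_mul, hX, hY, ← Matrix.mul_assoc, trace_mul_pow_comm]
      simp only [Matrix.mul_assoc]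
    have h3 : 0 ≤ ((X * X * (Y * Y)) ^ 2 ^ k).trace := by
      rw [← h1]
      have := Matrix.posSemidef_conjTranspose_mul_self (X * Y)
      simp only [Matrix.conjTranspose_eq_transpose_of_trivial] at this
      exact (this.pow _).trace_nonneg
    rw [h1, h2, ← sq ((X * X * (Y * Y)) ^ 2 ^ k).trace] at h
    exact abs_le_of_sq_le_sq' h h3 |>.2


lemma norm_matrix_exp_le [Nonempty ι] (A : Matrix ι ι ℝ) :
    ‖NormedSpace.exp A‖ ≤ Real.exp ‖A‖ := by
  have h1 := NormedSpace.exp_series_hasSum_exp' (𝕂 := ℝ) A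
  have h2 := NormedSpace.exp_series_hasSum_exp' (𝕂 := ℝ) ‖A‖
  rw [← Real.exp_eq_exp_ℝ] at h2
  rw [← h1.tsum_eq]
  refine tsum_of_norm_bounded h2 fun k => ?_
  rw [norm_smul, smul_eq_mul, Real.norm_of_nonneg (by positivity)]
  gcongr
  exact norm_pow_le A k

/-- Lie product formula. The two curves `exp (s A) exp (s B)` and `exp (s (A + B))` agree to first
order at `s = 0`, and telescoping bounds the distance of their `N`-th powers at `s = 1 / N` by
`N` times their distance. -/
lemma lie_product (A B : Matrix ι ι ℝ) [Nonempty ι] :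
    Tendsto (fun N : ℕ => (NormedSpace.exp ((N : ℝ)⁻¹ • A) * NormedSpace.exp ((N : ℝ)⁻¹ • B)) ^ N)
      atTop (nhds (NormedSpace.exp (A + B))) := by
  set Xs : ℝ → Matrix ι ι ℝ := fun s => NormedSpace.exp (s • A) * NormedSpace.exp (s • B) with hXs
  set Ys : ℝ → Matrix ι ι ℝ := fun s => NormedSpace.exp (s • (A + B)) with hYs
  set c : ℝ := ‖A‖ + ‖B‖ with hc
  have hX : ∀ s, 0 ≤ s → ‖Xs s‖ ≤ Real.exp (s * c) := by
    intro s hs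
    refine (norm_mul_le _ _).trans ?_
    rw [mul_add, Real.exp_add]
    gcongr
    · refine (norm_matrix_exp_le _).trans ?_
      rw [norm_smul, Real.norm_of_nonneg hs]
    · refine (norm_matrix_exp_le _).trans ?_
      rw [norm_smul, Real.norm_of_nonneg hs]
  have hY : ∀ s, 0 ≤ s → ‖Ys s‖ ≤ Real.exp (s * c) := by
    intro s hs
    refine (norm_matrix_exp_le _).trans ?_
    rw [norm_smul, Real.norm_of_nonneg hs]
    gcongr
    exact norm_add_le _ _
  have hd : HasDerivAt (fun s => Xs s - Ys s) 0 0 := by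
    have h1 := (hasDerivAt_exp_smul_const (𝕂 := ℝ) A (0:ℝ))
    have h2 := (hasDerivAt_exp_smul_const (𝕂 := ℝ) B (0:ℝ))
    have h3 := (hasDerivAt_exp_smul_const (𝕂 := ℝ) (A + B) (0:ℝ))
    have := (h1.mul h2).sub h3
    simp only [zero_smul, NormedSpace.exp_zero, one_mul, mul_one, sub_self] at this
    exact this
  have hpow : ∀ s, 0 ≤ s → ∀ k : ℕ,
      ‖Xs s ^ k - Ys s ^ k‖ ≤ k * ‖Xs s - Ys s‖ * Real.exp (s * c) ^ k := by
    intro s hs k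
    have hM : 1 ≤ Real.exp (s * c) := Real.one_le_exp (by positivity)
    induction k with
    | zero => simp
    | succ k ih =>
      have e : Xs s ^ (k + 1) - Ys s ^ (k + 1)
          = (Xs s ^ k - Ys s ^ k) * Xs s + Ys s ^ k * (Xs s - Ys s) := by
        rw [pow_succ, pow_succ]; noncomm_ring
      rw [e]
      refine (norm_add_le _ _).trans ?_
      have b1 : ‖(Xs s ^ k - Ys s ^ k) * Xs s‖
          ≤ k * ‖Xs s - Ys s‖ * Real.exp (s * c) ^ k * Real.exp (s * c) :=
        (norm_mul_le _ _).trans (by gcongr; exact hX s hs)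
      have b2 : ‖Ys s ^ k * (Xs s - Ys s)‖ ≤ Real.exp (s * c) ^ (k + 1) * ‖Xs s - Ys s‖ := by
        refine (norm_mul_le _ _).trans ?_
        gcongr
        refine (norm_pow_le _ _).trans ?_
        calc ‖Ys s‖ ^ k ≤ Real.exp (s * c) ^ k := by gcongr; exact hY s hs
          _ ≤ _ := pow_le_pow_right₀ hM (Nat.le_succ k)
      rw [pow_succ] at b2 ⊢
      push_cast
      linarith
  have hlim0 : Tendsto (fun N : ℕ => (N : ℝ)⁻¹) atTop (nhdsWithin 0 {0}ᶜ) := by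
    rw [tendsto_nhdsWithin_iff]
    refine ⟨tendsto_inv_atTop_nhds_zero_nat, ?_⟩
    filter_upwards [eventually_gt_atTop 0] with N hN
    simpa using hN.ne'
  have hlim := (hasDerivAt_iff_tendsto_slope.1 hd).comp hlim0
  have hlim2 : Tendsto (fun N : ℕ => (N : ℝ) * ‖Xs (N : ℝ)⁻¹ - Ys (N : ℝ)⁻¹‖ * Real.exp c)
      atTop (nhds 0) := by
    have := (hlim.norm).mul_const (Real.exp c)
    simp only [norm_zero, zero_mul] at this
    refine this.congr fun N => ?_
    simp [slope_def_module, norm_smul, hXs, hYs]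
  rw [tendsto_iff_norm_sub_tendsto_zero]
  refine squeeze_zero' (Eventually.of_forall fun _ => norm_nonneg _) ?_ hlim2
  filter_upwards [eventually_gt_atTop 0] with N hN
  have hN' : (N : ℝ) ≠ 0 := by exact_mod_cast hN.ne'
  have h := hpow (N : ℝ)⁻¹ (by positivity) N
  have e1 : Ys (N : ℝ)⁻¹ ^ N = NormedSpace.exp (A + B) := by
    simp only [hYs]
    rw [← Matrix.exp_nsmul, ← Nat.cast_smul_eq_nsmul ℝ, smul_smul, mul_inv_cancel₀ hN', one_smul]
  have e2 : Real.exp ((N : ℝ)⁻¹ * c) ^ N = Real.exp c := by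
    rw [← Real.exp_nat_mul, ← mul_assoc, mul_inv_cancel₀ hN', one_mul]
  rwa [e1, e2] at h

/-- Golden–Thompson inequality for real symmetric matrices: the dyadic trace inequality
`trace_mul_pow_le` passed to the limit in the Lie product formula. -/
theorem golden_thompson (A B : Matrix ι ι ℝ) (hA : Aᵀ = A) (hB : Bᵀ = B) :
    (NormedSpace.exp (A + B)).trace ≤ (NormedSpace.exp A * NormedSpace.exp B).trace := by
  cases isEmpty_or_nonempty ι with
  | inl h => simp [Matrix.trace]
  | inr h =>
    have hl := (lie_product A B).comp (tendsto_pow_atTop_atTop_of_one_lt (one_lt_two (α := ℕ)))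
    have hc : Continuous (fun M : Matrix ι ι ℝ => M.trace) := by fun_prop
    refine le_of_tendsto ((hc.tendsto _).comp hl) (Eventually.of_forall fun k => ?_)
    have hN' : ((2 ^ k : ℕ) : ℝ) ≠ 0 := by positivity
    have e : ∀ C : Matrix ι ι ℝ,
        NormedSpace.exp (((2 ^ k : ℕ) : ℝ)⁻¹ • C) ^ 2 ^ k = NormedSpace.exp C := by
      intro C
      rw [← Matrix.exp_nsmul, ← Nat.cast_smul_eq_nsmul ℝ, smul_smul, mul_inv_cancel₀ hN',
        one_smul]
    have := trace_mul_pow_le k (NormedSpace.exp (((2 ^ k : ℕ) : ℝ)⁻¹ • A))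
      (NormedSpace.exp (((2 ^ k : ℕ) : ℝ)⁻¹ • B))
      (by rw [← Matrix.exp_transpose, Matrix.transpose_smul, hA])
      (by rw [← Matrix.exp_transpose, Matrix.transpose_smul, hB])
    rwa [e, e] at this

/-! ### Loewner order and trace inequalities -/

lemma trace_mul_nonneg {P Q : Matrix ι ι ℝ} (hP : P.PosSemidef) (hQ : Q.PosSemidef) :
    0 ≤ (P * Q).trace := by
  have hP' := Matrix.nonneg_iff_posSemidef.2 hP
  have hC : (CFC.sqrt P).IsHermitian :=
    (Matrix.nonneg_iff_posSemidef.1 (CFC.sqrt_nonneg P)).isHermitian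
  rw [← CFC.sqrt_mul_sqrt_self P hP', Matrix.mul_assoc, Matrix.trace_mul_comm]
  have h := hQ.mul_mul_conjTranspose_same (CFC.sqrt P)
  rw [hC.eq] at h
  exact h.trace_nonneg

lemma posSemidef_exp {A : Matrix ι ι ℝ} (hA : A.IsHermitian) : (NormedSpace.exp A).PosSemidef := by
  rw [← Matrix.nonneg_iff_posSemidef, ← CFC.real_exp_eq_normedSpace_exp hA.isSelfAdjoint]
  exact cfc_nonneg fun x _ => (Real.exp_pos x).le

lemma exp_le_quadratic {A : Matrix ι ι ℝ} (hA : A.IsHermitian) (h1 : ‖A‖ ≤ 1) :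
    NormedSpace.exp A ≤ 1 + A + A ^ 2 := by
  have hs := hA.isSelfAdjoint
  have e : (1 + A + A ^ 2 : Matrix ι ι ℝ) = cfc (fun x : ℝ => 1 + x + x ^ 2) A := by
    rw [cfc_add A (fun x : ℝ => 1 + x) (fun x => x ^ 2), cfc_add A (fun x : ℝ => 1) (fun x => x),
      cfc_pow (fun x : ℝ => x) 2 A, cfc_id' ℝ A, cfc_const_one ℝ A]
  rw [e, ← CFC.real_exp_eq_normedSpace_exp hs]
  refine cfc_mono fun x hx => ?_
  cases isEmpty_or_nonempty ι with
  | inl h => simp [Subsingleton.elim A 0, spectrum.of_subsingleton] at hx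
  | inr h =>
    have hx1 : |x| ≤ 1 := (spectrum.norm_le_norm_of_mem hx).trans h1
    have := (abs_le.1 (Real.abs_exp_sub_one_sub_id_le hx1)).2
    linarith

/-- The tangent line of `exp` at `c` lies below the exponential, in the Loewner order. -/
lemma exp_ge_tangent {A : Matrix ι ι ℝ} (hA : A.IsHermitian) (c : ℝ) :
    Real.exp c • (A + (1 - c) • 1) ≤ NormedSpace.exp A := by
  have hs := hA.isSelfAdjoint
  have e : Real.exp c • (A + (1 - c) • 1) = cfc (fun x : ℝ => Real.exp c * (x + (1 - c))) A := by
    rw [cfc_const_mul (Real.exp c) (fun x : ℝ => x + (1 - c)) A,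
      cfc_add_const (1 - c) (fun x : ℝ => x) A, cfc_id' ℝ A, Algebra.algebraMap_eq_smul_one]
  rw [e, ← CFC.real_exp_eq_normedSpace_exp hs]
  refine cfc_mono fun x hx => ?_
  have := Real.add_one_le_exp (x - c)
  have h2 : Real.exp x = Real.exp c * Real.exp (x - c) := by rw [← Real.exp_add]; ring_nf
  rw [h2]
  gcongr
  linarith

lemma trace_mul_mono {P Q R : Matrix ι ι ℝ} (hP : P.PosSemidef) (h : Q ≤ R) :
    (P * Q).trace ≤ (P * R).trace := by
  have := trace_mul_nonneg hP (Matrix.le_iff.1 h)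
  rw [Matrix.mul_sub, Matrix.trace_sub] at this
  linarith

/-- For a positive semidefinite matrix the trace dominates every Rayleigh quotient, since
`p ⬝ p • 1 - p pᵀ` is positive semidefinite. -/
lemma quadForm_le_trace {P : Matrix ι ι ℝ} (hP : P.PosSemidef) (p : ι → ℝ) :
    p ⬝ᵥ (P *ᵥ p) ≤ P.trace * (p ⬝ᵥ p) := by
  have h : ((p ⬝ᵥ p) • (1 : Matrix ι ι ℝ) - vecMulVec p p).PosSemidef := by
    refine Matrix.PosSemidef.of_dotProduct_mulVec_nonneg ?_ fun w => ?_
    · ext i j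
      simp [Matrix.vecMulVec_apply, Matrix.one_apply, mul_comm, eq_comm]
    · have := Finset.sum_mul_sq_le_sq_mul_sq Finset.univ w p
      simp only [Matrix.sub_mulVec, Matrix.smul_mulVec, Matrix.one_mulVec, star_trivial,
        dotProduct_sub, dotProduct_smul, Matrix.vecMulVec_mulVec, op_smul_eq_smul]
      simp only [dotProduct, smul_eq_mul] at this ⊢
      have e : (∑ i, p i * w i) = ∑ i, w i * p i := by simp only [mul_comm]
      simp only [sq] at this
      rw [e]; linarith
  have := trace_mul_nonneg hP h
  rw [Matrix.mul_sub, Matrix.trace_sub, Matrix.mul_smul, Matrix.mul_one, Matrix.trace_smul,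
    Matrix.mul_vecMulVec, Matrix.trace_vecMulVec] at this
  rw [dotProduct_comm p, mul_comm]
  simpa using this

/-! ### The spectral norm -/

/-- `specNorm` is the `ℓ²` operator norm. -/
lemma specNorm_eq {m n : ℕ} (A : Matrix (Fin m) (Fin n) ℝ) : specNorm A = ‖A‖ := by
  have he : ∀ {k : ℕ} (v : Fin k → ℝ), eucNorm v = ‖(WithLp.toLp 2 v : EuclideanSpace ℝ (Fin k))‖ := by
    intro k v
    simp [eucNorm, EuclideanSpace.norm_eq]
  have hub : ∀ v : Fin n → ℝ, eucNorm (A *ᵥ v) ≤ ‖A‖ * eucNorm v := by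
    intro v
    rw [he, he]
    exact Matrix.l2_opNorm_mulVec A (WithLp.toLp 2 v)
  have hbdd : ∀ r ∈ {r | ∃ v : Fin n → ℝ, eucNorm v ≤ 1 ∧ r = eucNorm (A.mulVec v)}, r ≤ ‖A‖ := by
    rintro r ⟨v, hv, rfl⟩
    exact (hub v).trans (mul_le_of_le_one_right (norm_nonneg _) hv)
  refine le_antisymm (csSup_le ⟨0, 0, by simp [eucNorm]⟩ hbdd) ?_
  rw [Matrix.l2_opNorm_def]
  refine ContinuousLinearMap.opNorm_le_of_unit_norm ?_ fun v hv => ?_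
  · exact le_csSup ⟨_, hbdd⟩ ⟨0, by simp [eucNorm]⟩
  · refine le_csSup ⟨_, hbdd⟩ ⟨v.ofLp, ?_, ?_⟩
    · rw [he]; exact hv.le
    · rw [he]; rfl

lemma specNorm_nonneg {m n : ℕ} (A : Matrix (Fin m) (Fin n) ℝ) : 0 ≤ specNorm A := by
  rw [specNorm_eq]; exact norm_nonneg _

omit [DecidableEq ι] in
lemma dotProduct_self_eq {κ : Type*} [Fintype κ] (v : κ → ℝ) :
    v ⬝ᵥ v = ‖(WithLp.toLp 2 v : EuclideanSpace ℝ κ)‖ ^ 2 := by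
  rw [EuclideanSpace.norm_sq_eq]; simp [dotProduct, sq]

lemma mulVec_dotProduct_le {κ μ : Type*} [Fintype κ] [Fintype μ] [DecidableEq μ]
    (A : Matrix κ μ ℝ) (v : μ → ℝ) :
    (A *ᵥ v) ⬝ᵥ (A *ᵥ v) ≤ ‖A‖ ^ 2 * (v ⬝ᵥ v) := by
  rw [dotProduct_self_eq, dotProduct_self_eq, ← mul_pow]
  gcongr
  exact Matrix.l2_opNorm_mulVec A (WithLp.toLp 2 v)

lemma smul_one_sub_posSemidef {A : Matrix ι ι ℝ} {V : ℝ} (hA : A.IsHermitian) (hV : ‖A‖ ≤ V) :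
    (V • (1 : Matrix ι ι ℝ) - A).PosSemidef := by
  refine Matrix.PosSemidef.of_dotProduct_mulVec_nonneg ?_ fun w => ?_
  · refine Matrix.IsHermitian.sub ?_ hA
    simp [Matrix.IsHermitian]
  · have h1 := mulVec_dotProduct_le A w
    have h2 := Finset.sum_mul_sq_le_sq_mul_sq Finset.univ w (A *ᵥ w)
    have h0 : 0 ≤ w ⬝ᵥ w := by rw [dotProduct_self_eq]; positivity
    have hV0 : 0 ≤ V := (norm_nonneg _).trans hV
    have h3 : ‖A‖ ^ 2 ≤ V ^ 2 := by gcongr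
    simp only [Matrix.sub_mulVec, Matrix.smul_mulVec, Matrix.one_mulVec, star_trivial,
        dotProduct_sub, dotProduct_smul, smul_eq_mul]
    have h4 : (w ⬝ᵥ (A *ᵥ w)) ^ 2 ≤ (V * (w ⬝ᵥ w)) ^ 2 := by
      calc (w ⬝ᵥ (A *ᵥ w)) ^ 2 ≤ (w ⬝ᵥ w) * ((A *ᵥ w) ⬝ᵥ (A *ᵥ w)) := by
            simpa [dotProduct, sq] using h2
        _ ≤ (w ⬝ᵥ w) * (V ^ 2 * (w ⬝ᵥ w)) := by gcongr; exact h1.trans (by gcongr)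
        _ = _ := by ring
    have := (abs_le_of_sq_le_sq' h4 (by positivity)).2
    linarith

/-! ### The self-adjoint dilation -/

variable {d1 d2 : ℕ}

/-- The self-adjoint dilation of a rectangular matrix, given by its array of entries. -/
def dil (x : Fin d1 → Fin d2 → ℝ) : Matrix (Fin d1 ⊕ Fin d2) (Fin d1 ⊕ Fin d2) ℝ :=
  Matrix.fromBlocks 0 (Matrix.of x) (Matrix.of x)ᵀ 0

lemma dil_transpose (x : Fin d1 → Fin d2 → ℝ) : (dil x)ᵀ = dil x := by
  simp [dil, Matrix.fromBlocks_transpose]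

lemma dil_isHermitian (x : Fin d1 → Fin d2 → ℝ) : (dil x).IsHermitian := by
  rw [Matrix.IsHermitian, Matrix.conjTranspose_eq_transpose_of_trivial, dil_transpose]

lemma dil_add (x y : Fin d1 → Fin d2 → ℝ) : dil (x + y) = dil x + dil y := by
  ext (i | i) (j | j) <;> simp [dil]

lemma dil_zero : dil (0 : Fin d1 → Fin d2 → ℝ) = 0 := by
  ext (i | i) (j | j) <;> simp [dil]

lemma dil_sq (x : Fin d1 → Fin d2 → ℝ) : dil x ^ 2 =
    Matrix.fromBlocks (Matrix.of x * (Matrix.of x)ᵀ) 0 0 ((Matrix.of x)ᵀ * Matrix.of x) := by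
  rw [sq, dil, Matrix.fromBlocks_multiply]; simp

lemma continuous_dil : Continuous (dil (d1 := d1) (d2 := d2)) := by
  refine continuous_matrix fun i j => ?_
  rcases i with i | i <;> rcases j with j | j <;> simp only [dil, Matrix.fromBlocks_apply₁₁,
    Matrix.fromBlocks_apply₁₂, Matrix.fromBlocks_apply₂₁, Matrix.fromBlocks_apply₂₂,
    Matrix.zero_apply, Matrix.transpose_apply, Matrix.of_apply] <;> fun_prop

lemma norm_dil_le (x : Fin d1 → Fin d2 → ℝ) : ‖dil x‖ ≤ ‖Matrix.of x‖ := by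
  rw [Matrix.l2_opNorm_def (dil x)]
  refine ContinuousLinearMap.opNorm_le_bound _ (norm_nonneg _) fun w => ?_
  refine le_of_sq_le_sq ?_ (by positivity)
  have h1 := mulVec_dotProduct_le (Matrix.of x) (fun j => w.ofLp (Sum.inr j))
  have h2 := mulVec_dotProduct_le (Matrix.of x)ᵀ (fun j => w.ofLp (Sum.inl j))
  have e : ‖(Matrix.of x)ᵀ‖ = ‖Matrix.of x‖ := by
    rw [← Matrix.conjTranspose_eq_transpose_of_trivial, Matrix.l2_opNorm_conjTranspose]
  rw [e] at h2
  have e1 : ‖w‖ ^ 2 = (fun j => w.ofLp (Sum.inl j)) ⬝ᵥ (fun j => w.ofLp (Sum.inl j))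
      + (fun j => w.ofLp (Sum.inr j)) ⬝ᵥ (fun j => w.ofLp (Sum.inr j)) := by
    rw [EuclideanSpace.norm_sq_eq]; simp [dotProduct, sq]
  have e2 : (dil x *ᵥ w.ofLp) ⬝ᵥ (dil x *ᵥ w.ofLp) =
      (Matrix.of x *ᵥ (fun j => w.ofLp (Sum.inr j))) ⬝ᵥ (Matrix.of x *ᵥ (fun j => w.ofLp (Sum.inr j)))
      + ((Matrix.of x)ᵀ *ᵥ (fun j => w.ofLp (Sum.inl j))) ⬝ᵥ
        ((Matrix.of x)ᵀ *ᵥ (fun j => w.ofLp (Sum.inl j))) := by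
    simp [dil, Matrix.fromBlocks_mulVec, dotProduct, Function.comp_def]
  have e3 := dotProduct_self_eq (dil x *ᵥ w.ofLp)
  rw [mul_pow, e1]
  change ‖(WithLp.toLp 2 (dil x *ᵥ w.ofLp) : EuclideanSpace ℝ (Fin d1 ⊕ Fin d2))‖ ^ 2 ≤ _
  rw [← e3, e2]
  linarith

/-- The top eigenvalue of the dilation is the spectral norm, so the trace of the exponential
controls it. Each unit vector `v` with `A v ≠ 0` yields the trial vector `(A v / ‖A v‖, v)`, and
`exp_ge_tangent` replaces the spectral decomposition. -/
lemma exp_specNorm_le_trace (x : Fin d1 → Fin d2 → ℝ) (hd : 0 < d1 + d2) {θ : ℝ} (hθ : 0 ≤ θ) :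
    Real.exp (θ * specNorm (Matrix.of x)) ≤ (NormedSpace.exp (θ • dil x)).trace := by
  have hH : (θ • dil x).IsHermitian := by
    rw [Matrix.IsHermitian, Matrix.conjTranspose_eq_transpose_of_trivial, Matrix.transpose_smul,
      dil_transpose]
  have hP := posSemidef_exp hH
  set T := (NormedSpace.exp (θ • dil x)).trace with hT
  have key : ∀ (p : Fin d1 ⊕ Fin d2 → ℝ) (c : ℝ), θ * (p ⬝ᵥ (dil x *ᵥ p)) = c * (p ⬝ᵥ p) →
      Real.exp c * (p ⬝ᵥ p) ≤ T * (p ⬝ᵥ p) := by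
    intro p c hc
    refine le_trans ?_ (quadForm_le_trace hP p)
    have h := (Matrix.le_iff.1 (exp_ge_tangent hH c)).dotProduct_mulVec_nonneg p
    simp only [Matrix.sub_mulVec, Matrix.smul_mulVec, Matrix.add_mulVec, Matrix.one_mulVec,
      star_trivial, dotProduct_sub, dotProduct_smul, smul_eq_mul, dotProduct_add, hc] at h
    linarith
  have hone : 1 ≤ T := by
    have hpos : ∃ p : Fin d1 ⊕ Fin d2 → ℝ, 0 < p ⬝ᵥ p ∧ p ⬝ᵥ (dil x *ᵥ p) = 0 := by
      rcases Nat.eq_zero_or_pos d1 with h | h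
      · refine ⟨Pi.single (Sum.inr ⟨0, by omega⟩) 1, by simp, ?_⟩
        simp [dil]
      · refine ⟨Pi.single (Sum.inl ⟨0, h⟩) 1, by simp, ?_⟩
        simp [dil]
    obtain ⟨p, hp, hp0⟩ := hpos
    have := key p 0 (by rw [hp0]; ring)
    rw [Real.exp_zero] at this
    exact le_of_mul_le_mul_right this hp
  have hT0 : 0 < T := by linarith
  rw [← Real.le_log_iff_exp_le hT0, specNorm_eq]
  rcases hθ.eq_or_lt with h0 | hθ
  · rw [← h0, zero_mul]; exact Real.log_nonneg hone
  rw [← le_div_iff₀' hθ, Matrix.l2_opNorm_def]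
  refine ContinuousLinearMap.opNorm_le_of_unit_norm (div_nonneg (Real.log_nonneg hone) hθ.le)
    fun v hv => ?_
  set y : Fin d1 → ℝ := Matrix.of x *ᵥ v.ofLp with hy
  have hv' : v.ofLp ⬝ᵥ v.ofLp = 1 := by rw [dotProduct_self_eq]; simp [hv]
  change ‖(WithLp.toLp 2 y : EuclideanSpace ℝ (Fin d1))‖ ≤ _
  set ρ := ‖(WithLp.toLp 2 y : EuclideanSpace ℝ (Fin d1))‖ with hρ
  have hyy : y ⬝ᵥ y = ρ ^ 2 := dotProduct_self_eq y
  rcases (norm_nonneg (WithLp.toLp 2 y : EuclideanSpace ℝ (Fin d1))).eq_or_lt with h0 | hρ0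
  · rw [hρ, ← h0]; exact div_nonneg (Real.log_nonneg hone) hθ.le
  rw [le_div_iff₀' hθ, Real.le_log_iff_exp_le hT0]
  change 0 < ρ at hρ0
  -- the vector `(y / ‖y‖, v)` has squared length `2` and Rayleigh quotient `‖y‖`
  have h2 : Sum.elim (ρ⁻¹ • y) v.ofLp ⬝ᵥ Sum.elim (ρ⁻¹ • y) v.ofLp = 2 := by
    rw [sumElim_dotProduct_sumElim, hv', smul_dotProduct, dotProduct_smul, hyy]
    simp only [smul_eq_mul]; field_simp; norm_num
  have h3 : Sum.elim (ρ⁻¹ • y) v.ofLp ⬝ᵥ (dil x *ᵥ Sum.elim (ρ⁻¹ • y) v.ofLp) = 2 * ρ := by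
    rw [dil, Matrix.fromBlocks_mulVec]
    simp only [Sum.elim_comp_inl, Sum.elim_comp_inr, Matrix.zero_mulVec, zero_add, add_zero]
    rw [sumElim_dotProduct_sumElim, ← hy, Matrix.mulVec_transpose, dotProduct_comm v.ofLp,
      ← Matrix.dotProduct_mulVec, ← hy, smul_dotProduct, hyy]
    simp only [smul_eq_mul]; field_simp; norm_num
  have := key _ (θ * ρ) (by rw [h2, h3]; ring)
  rw [h2] at this
  linarith
end

/-! ### The matrix Laplace transform of a sum of independent summands -/

section
open scoped Matrix.Norms.L2Operator MatrixOrder ENNReal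

variable {ι : Type*} [Fintype ι] [DecidableEq ι] {d1 d2 : ℕ}

lemma continuous_specNorm_of :
    Continuous fun x : Fin d1 → Fin d2 → ℝ => specNorm (Matrix.of x) := by
  simp only [specNorm_eq]
  exact continuous_norm.comp (continuous_id (X := Matrix (Fin d1) (Fin d2) ℝ))

lemma continuous_exp_dil (θ : ℝ) :
    Continuous fun x : Fin d1 → Fin d2 → ℝ => NormedSpace.exp (θ • dil x) := by
  let : NormedAlgebra ℚ (Matrix (Fin d1 ⊕ Fin d2) (Fin d1 ⊕ Fin d2) ℝ) :=
    NormedAlgebra.restrictScalars ℚ ℝ _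
  exact NormedSpace.exp_continuous.comp (continuous_dil.const_smul θ)

lemma continuous_trace_mul_exp_dil (P : Matrix (Fin d1 ⊕ Fin d2) (Fin d1 ⊕ Fin d2) ℝ) (θ : ℝ) :
    Continuous fun x : Fin d1 → Fin d2 → ℝ => (P * NormedSpace.exp (θ • dil x)).trace := by
  have hc : Continuous (fun M : Matrix (Fin d1 ⊕ Fin d2) (Fin d1 ⊕ Fin d2) ℝ => (P * M).trace) := by
    fun_prop
  exact hc.comp (continuous_exp_dil θ)

omit [DecidableEq ι] in
lemma integral_trace_mul {F : Type*} [MeasurableSpace F] {ν : Measure F} (P : Matrix ι ι ℝ)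
    (M : F → Matrix ι ι ℝ) (hM : ∀ i j, Integrable (fun x => M x i j) ν) :
    Integrable (fun x => (P * M x).trace) ν ∧
    ∫ x, (P * M x).trace ∂ν = (P * Matrix.of fun i j => ∫ x, M x i j ∂ν).trace := by
  have key : ∀ N : Matrix ι ι ℝ, (P * N).trace = ∑ i, ∑ j, P i j * N j i := fun N => by
    simp only [Matrix.trace, Matrix.diag_apply, Matrix.mul_apply]
  simp only [key]
  have h1 : ∀ i j, Integrable (fun x => P i j * M x j i) ν := fun i j => (hM j i).const_mul _
  refine ⟨integrable_finsetSum _ fun i _ => integrable_finsetSum _ fun j _ => h1 i j, ?_⟩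
  refine (integral_finsetSum _ fun i _ => integrable_finsetSum _ fun j _ => h1 i j).trans ?_
  refine Finset.sum_congr rfl fun i _ => ?_
  refine (integral_finsetSum _ fun j _ => h1 i j).trans ?_
  exact Finset.sum_congr rfl fun j _ => integral_const_mul _ _

lemma abs_entry_le_specNorm {m n : ℕ} (A : Matrix (Fin m) (Fin n) ℝ) (a : Fin m) (b : Fin n) :
    |A a b| ≤ specNorm A := by
  rw [specNorm_eq]
  have h := Matrix.l2_opNorm_mulVec A (EuclideanSpace.single b 1)
  rw [PiLp.norm_single, norm_one, mul_one] at h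
  refine le_trans ?_ h
  refine le_trans (le_of_eq ?_) (PiLp.norm_apply_le _ a)
  simp

/-- One step of the matrix Laplace transform recursion: averaging over a centred bounded summand
multiplies the trace exponential by at most `1 + θ² V`. -/
lemma laplace_step (ν : Measure (Fin d1 → Fin d2 → ℝ)) [IsProbabilityMeasure ν] (r V θ : ℝ)
    (hθ : 0 ≤ θ) (hθr : θ * r ≤ 1)
    (hbd : ∀ᵐ x ∂ν, specNorm (Matrix.of x) ≤ r)
    (hmean : ∀ a b, ∫ x, x a b ∂ν = 0)
    (hv1 : specNorm (Matrix.of fun a b => ∫ x, (Matrix.of x * (Matrix.of x)ᵀ) a b ∂ν) ≤ V)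
    (hv2 : specNorm (Matrix.of fun a b => ∫ x, ((Matrix.of x)ᵀ * Matrix.of x) a b ∂ν) ≤ V)
    (P : Matrix (Fin d1 ⊕ Fin d2) (Fin d1 ⊕ Fin d2) ℝ) (hP : P.PosSemidef) :
    ∫⁻ x, ENNReal.ofReal (P * NormedSpace.exp (θ • dil x)).trace ∂ν
      ≤ ENNReal.ofReal ((1 + θ ^ 2 * V) * P.trace) := by
  have hent : ∀ a b, ∀ᵐ x ∂ν, ‖x a b‖ ≤ r := fun a b => by
    filter_upwards [hbd] with x hx
    exact (abs_entry_le_specNorm (Matrix.of x) a b).trans hx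
  have hm : ∀ a b, Measurable fun x : Fin d1 → Fin d2 → ℝ => x a b := fun a b => by fun_prop
  have hInt : ∀ a b, Integrable (fun x => x a b) ν := fun a b =>
    Integrable.of_bound (hm a b).aestronglyMeasurable r (hent a b)
  have hint2 : ∀ a b a' b', Integrable (fun x => x a b * x a' b') ν := fun a b a' b' =>
    (hInt a' b').bdd_mul (hm a b).aestronglyMeasurable (hent a b)
  have hD : ∀ i j, Integrable (fun x => dil x i j) ν := by
    rintro (i | i) (j | j) <;> simp [dil, hInt]
  have hS1 : ∀ a b, Integrable (fun x => (Matrix.of x * (Matrix.of x)ᵀ) a b) ν := fun a b => by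
    simp only [Matrix.mul_apply, Matrix.of_apply, Matrix.transpose_apply]
    exact integrable_finsetSum _ fun _ _ => hint2 _ _ _ _
  have hS2 : ∀ a b, Integrable (fun x => ((Matrix.of x)ᵀ * (Matrix.of x)) a b) ν := fun a b => by
    simp only [Matrix.mul_apply, Matrix.of_apply, Matrix.transpose_apply]
    exact integrable_finsetSum _ fun _ _ => hint2 _ _ _ _
  have hD2 : ∀ i j, Integrable (fun x => (dil x ^ 2) i j) ν := by
    simp only [dil_sq]
    rintro (i | i) (j | j) <;> simp [hS1, hS2]
  have hV : ((V • (1 : Matrix (Fin d1 ⊕ Fin d2) (Fin d1 ⊕ Fin d2) ℝ))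
      - Matrix.of fun i j => ∫ x, (dil x ^ 2) i j ∂ν).PosSemidef := by
    set A := Matrix.of fun a b => ∫ x, (Matrix.of x * (Matrix.of x)ᵀ) a b ∂ν with hA
    set B := Matrix.of fun a b => ∫ x, ((Matrix.of x)ᵀ * Matrix.of x) a b ∂ν with hB
    have hAh : A.IsHermitian := by
      ext i j
      simp [hA, Matrix.mul_apply, mul_comm]
    have hBh : B.IsHermitian := by
      ext i j
      simp [hB, Matrix.mul_apply, mul_comm]
    have pA := smul_one_sub_posSemidef (V := V) hAh (by rw [← specNorm_eq]; exact hv1)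
    have pB := smul_one_sub_posSemidef (V := V) hBh (by rw [← specNorm_eq]; exact hv2)
    have e : (V • (1 : Matrix (Fin d1 ⊕ Fin d2) (Fin d1 ⊕ Fin d2) ℝ))
      - (Matrix.of fun i j => ∫ x, (dil x ^ 2) i j ∂ν)
        = Matrix.fromBlocks (V • 1 - A) 0 0 (V • 1 - B) := by
      simp only [dil_sq]
      ext (i | i) (j | j) <;> simp [hA, hB, Matrix.one_apply]
    rw [e]
    refine Matrix.PosSemidef.of_dotProduct_mulVec_nonneg ?_ fun w => ?_
    · exact Matrix.IsHermitian.fromBlocks pA.1 (by simp) pB.1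
    · have h1 := pA.dotProduct_mulVec_nonneg (w ∘ Sum.inl)
      have h2 := pB.dotProduct_mulVec_nonneg (w ∘ Sum.inr)
      simp only [star_trivial] at h1 h2 ⊢
      rw [Matrix.fromBlocks_mulVec]
      simp only [Matrix.zero_mulVec, zero_add, add_zero]
      have := add_nonneg h1 h2
      simpa [dotProduct] using this
  obtain ⟨i1, e1⟩ := integral_trace_mul P dil hD
  obtain ⟨i2, e2⟩ := integral_trace_mul P (fun x => dil x ^ 2) hD2
  have hz : (Matrix.of fun i j => ∫ x, dil x i j ∂ν) = 0 := by
    ext (i | i) (j | j) <;> simp [dil, hmean]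
  rw [hz, Matrix.mul_zero, Matrix.trace_zero] at e1
  have e3 := trace_mul_nonneg hP hV
  rw [Matrix.mul_sub, Matrix.trace_sub, ← e2, Matrix.mul_smul, Matrix.mul_one,
    Matrix.trace_smul, smul_eq_mul] at e3
  have hH : ∀ x : Fin d1 → Fin d2 → ℝ, (θ • dil x).IsHermitian := fun x => by
    rw [Matrix.IsHermitian, Matrix.conjTranspose_eq_transpose_of_trivial, Matrix.transpose_smul,
      dil_transpose]
  have hpt : ∀ᵐ x ∂ν, (P * NormedSpace.exp (θ • dil x)).trace
      ≤ P.trace + θ * (P * dil x).trace + θ ^ 2 * (P * dil x ^ 2).trace := by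
    filter_upwards [hbd] with x hx
    have hn : ‖θ • dil x‖ ≤ 1 := by
      rw [norm_smul, Real.norm_of_nonneg hθ]
      refine le_trans ?_ hθr
      gcongr
      exact (norm_dil_le x).trans (by rwa [← specNorm_eq])
    refine (trace_mul_mono hP (exp_le_quadratic (hH x) hn)).trans (le_of_eq ?_)
    simp only [Matrix.mul_add, Matrix.mul_one, Matrix.trace_add, smul_pow, Matrix.mul_smul,
      Matrix.trace_smul, smul_eq_mul]
  have hint3 : Integrable (fun x => P.trace + θ * (P * dil x).trace
      + θ ^ 2 * (P * dil x ^ 2).trace) ν :=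
    ((integrable_const _).add (i1.const_mul _)).add (i2.const_mul _)
  calc ∫⁻ x, ENNReal.ofReal (P * NormedSpace.exp (θ • dil x)).trace ∂ν
      ≤ ∫⁻ x, ENNReal.ofReal (P.trace + θ * (P * dil x).trace
          + θ ^ 2 * (P * dil x ^ 2).trace) ∂ν :=
        lintegral_mono_ae (hpt.mono fun x hx => ENNReal.ofReal_le_ofReal hx)
    _ = ENNReal.ofReal (∫ x, (P.trace + θ * (P * dil x).trace
          + θ ^ 2 * (P * dil x ^ 2).trace) ∂ν) := by
        rw [ofReal_integral_eq_lintegral_ofReal hint3]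
        exact hpt.mono fun x hx => (trace_mul_nonneg hP (posSemidef_exp (hH x))).trans hx
    _ ≤ _ := by
        refine ENNReal.ofReal_le_ofReal ?_
        have a1 : ∫ x, (P.trace + θ * (P * dil x).trace + θ ^ 2 * (P * dil x ^ 2).trace) ∂ν
            = ∫ x, (P.trace + θ * (P * dil x).trace) ∂ν
              + ∫ x, θ ^ 2 * (P * dil x ^ 2).trace ∂ν :=
          integral_add ((integrable_const _).add (i1.const_mul _)) (i2.const_mul _)
        have a2 : ∫ x, (P.trace + θ * (P * dil x).trace) ∂ν
            = ∫ _, P.trace ∂ν + ∫ x, θ * (P * dil x).trace ∂ν :=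
          integral_add (integrable_const _) (i1.const_mul _)
        rw [a1, a2, integral_const_mul, integral_const_mul, e1]
        simp only [integral_const, probReal_univ, one_smul, mul_zero, add_zero]
        nlinarith [sq_nonneg θ]

/-- The `k`-fold convolution power of a measure: the law of the sum of `k` independent copies. -/
def convPow (ν : Measure (Fin d1 → Fin d2 → ℝ)) : ℕ → Measure (Fin d1 → Fin d2 → ℝ)
  | 0 => Measure.dirac 0
  | k + 1 => ((convPow ν k).prod ν).map fun p => p.1 + p.2

instance isProbabilityMeasure_convPow (ν : Measure (Fin d1 → Fin d2 → ℝ)) [IsProbabilityMeasure ν]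
    (k : ℕ) : IsProbabilityMeasure (convPow ν k) := by
  induction k with
  | zero => simp only [convPow]; infer_instance
  | succ k ih =>
    simp only [convPow]
    exact Measure.isProbabilityMeasure_map (by fun_prop)

/-- The matrix Laplace transform of a sum of `k` independent centred summands. Golden–Thompson
splits off the last summand, which `laplace_step` then averages out. -/
lemma laplace_convPow (ν : Measure (Fin d1 → Fin d2 → ℝ)) [IsProbabilityMeasure ν] (r V θ : ℝ)
    (hθ : 0 ≤ θ) (hθr : θ * r ≤ 1) (hV : 0 ≤ V)
    (hbd : ∀ᵐ x ∂ν, specNorm (Matrix.of x) ≤ r)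
    (hmean : ∀ a b, ∫ x, x a b ∂ν = 0)
    (hv1 : specNorm (Matrix.of fun a b => ∫ x, (Matrix.of x * (Matrix.of x)ᵀ) a b ∂ν) ≤ V)
    (hv2 : specNorm (Matrix.of fun a b => ∫ x, ((Matrix.of x)ᵀ * Matrix.of x) a b ∂ν) ≤ V)
    (k : ℕ) :
    ∫⁻ x, ENNReal.ofReal (NormedSpace.exp (θ • dil x)).trace ∂(convPow ν k)
      ≤ ENNReal.ofReal ((1 + θ ^ 2 * V) ^ k * (d1 + d2)) := by
  have hc : Continuous fun x : Fin d1 → Fin d2 → ℝ => (NormedSpace.exp (θ • dil x)).trace := by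
    simpa using continuous_trace_mul_exp_dil 1 θ
  have hmeas : Measurable fun x : Fin d1 → Fin d2 → ℝ =>
      ENNReal.ofReal (NormedSpace.exp (θ • dil x)).trace := hc.measurable.ennreal_ofReal
  have hH : ∀ x : Fin d1 → Fin d2 → ℝ, (θ • dil x).IsHermitian := fun x => by
    rw [Matrix.IsHermitian, Matrix.conjTranspose_eq_transpose_of_trivial, Matrix.transpose_smul,
      dil_transpose]
  induction k with
  | zero =>
    simp only [convPow]
    rw [lintegral_dirac' _ hmeas]
    simp [dil_zero]
  | succ k ih =>
    simp only [convPow]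
    have hmeas2 : Measurable fun p : (Fin d1 → Fin d2 → ℝ) × (Fin d1 → Fin d2 → ℝ) =>
        ENNReal.ofReal (NormedSpace.exp (θ • dil (p.1 + p.2))).trace :=
      hmeas.comp (measurable_fst.add measurable_snd)
    rw [lintegral_map hmeas (by fun_prop), lintegral_prod _ hmeas2.aemeasurable]
    calc _ ≤ ∫⁻ x, ENNReal.ofReal ((1 + θ ^ 2 * V) * (NormedSpace.exp (θ • dil x)).trace)
            ∂(convPow ν k) := by
          refine lintegral_mono fun x => ?_
          refine le_trans (lintegral_mono fun y => ?_)
            (laplace_step ν r V θ hθ hθr hbd hmean hv1 hv2 _ (posSemidef_exp (hH x)))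
          refine ENNReal.ofReal_le_ofReal ?_
          simp only [dil_add, smul_add]
          exact golden_thompson _ _ (hH x) (hH y)
      _ = ENNReal.ofReal (1 + θ ^ 2 * V) *
            ∫⁻ x, ENNReal.ofReal (NormedSpace.exp (θ • dil x)).trace ∂(convPow ν k) := by
          rw [← lintegral_const_mul _ hmeas]
          refine lintegral_congr fun x => ?_
          rw [ENNReal.ofReal_mul (by positivity)]
      _ ≤ ENNReal.ofReal (1 + θ ^ 2 * V) * ENNReal.ofReal ((1 + θ ^ 2 * V) ^ k * (d1 + d2)) := by
          gcongr
      _ = _ := by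
          rw [← ENNReal.ofReal_mul (by positivity)]; congr 1; ring

/-- Matrix Chernoff bound for a sum of `k` independent centred summands. -/
lemma tail_convPow (ν : Measure (Fin d1 → Fin d2 → ℝ)) [IsProbabilityMeasure ν] (r V θ : ℝ)
    (hθ : 0 ≤ θ) (hθr : θ * r ≤ 1) (hV : 0 ≤ V)
    (hbd : ∀ᵐ x ∂ν, specNorm (Matrix.of x) ≤ r)
    (hmean : ∀ a b, ∫ x, x a b ∂ν = 0)
    (hv1 : specNorm (Matrix.of fun a b => ∫ x, (Matrix.of x * (Matrix.of x)ᵀ) a b ∂ν) ≤ V)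
    (hv2 : specNorm (Matrix.of fun a b => ∫ x, ((Matrix.of x)ᵀ * Matrix.of x) a b ∂ν) ≤ V)
    (hd : 0 < d1 + d2) (k : ℕ) (u : ℝ) :
    (convPow ν k).real {x | u ≤ specNorm (Matrix.of x)}
      ≤ (d1 + d2) * Real.exp (-(θ * u) + k * (θ ^ 2 * V)) := by
  have hc : Continuous fun x : Fin d1 → Fin d2 → ℝ => (NormedSpace.exp (θ • dil x)).trace := by
    simpa using continuous_trace_mul_exp_dil 1 θ
  have hmeas : Measurable fun x : Fin d1 → Fin d2 → ℝ =>
      ENNReal.ofReal (NormedSpace.exp (θ • dil x)).trace := hc.measurable.ennreal_ofReal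
  have hpos := Real.exp_pos (θ * u)
  have h1 : (convPow ν k) {x | u ≤ specNorm (Matrix.of x)} ≤
      ENNReal.ofReal ((1 + θ ^ 2 * V) ^ k * (d1 + d2)) / ENNReal.ofReal (Real.exp (θ * u)) := by
    refine le_trans (measure_mono ?_) ((meas_ge_le_lintegral_div
      (f := fun x => ENNReal.ofReal (NormedSpace.exp (θ • dil x)).trace)
      hmeas.aemeasurable (ENNReal.ofReal_pos.2 hpos).ne' ENNReal.ofReal_ne_top).trans
        (ENNReal.div_le_div_right
          (laplace_convPow ν r V θ hθ hθr hV hbd hmean hv1 hv2 k) _))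
    intro x hx
    refine ENNReal.ofReal_le_ofReal (le_trans ?_ (exp_specNorm_le_trace x hd hθ))
    have : u ≤ specNorm (Matrix.of x) := hx
    gcongr
  rw [← ENNReal.ofReal_div_of_pos hpos] at h1
  refine (ENNReal.toReal_le_of_le_ofReal (by positivity) h1).trans ?_
  rw [Real.exp_add, Real.exp_neg, div_eq_mul_inv]
  have h2 : (1 + θ ^ 2 * V) ^ k ≤ Real.exp (k * (θ ^ 2 * V)) := by
    rw [Real.exp_nat_mul]
    gcongr
    rw [add_comm]; exact Real.add_one_le_exp _
  calc _ ≤ Real.exp (k * (θ ^ 2 * V)) * (d1 + d2) * (Real.exp (θ * u))⁻¹ := by gcongr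
    _ = _ := by ring
end

/-! ### Mixing coefficients and product laws -/

section
open scoped ENNReal

lemma bddAbove_betaCoef {Ω : Type} {mA mB : MeasurableSpace Ω} [m0 : MeasurableSpace Ω]
    (P : Measure Ω) [IsProbabilityMeasure P] (hA : mA ≤ m0) (hB : mB ≤ m0) :
    BddAbove {r | ∃ (I J : ℕ) (A : Fin I → Set Ω) (B : Fin J → Set Ω),
    (∀ i, MeasurableSet[mA] (A i)) ∧ (∀ j, MeasurableSet[mB] (B j)) ∧
    Pairwise (Function.onFun Disjoint A) ∧ Pairwise (Function.onFun Disjoint B) ∧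
    (⋃ i, A i) = Set.univ ∧ (⋃ j, B j) = Set.univ ∧
    2 * r = ∑ i, ∑ j,
      |(P (A i ∩ B j)).toReal - (P (A i)).toReal * (P (B j)).toReal|} := by
  refine ⟨1, ?_⟩
  rintro r ⟨I, J, A, B, hAm, hBm, dA, dB, uA, uB, hr⟩
  have sA : ∑ i, P.real (A i) = 1 := by
    rw [← measureReal_iUnion_fintype dA fun i => hA _ (hAm i), uA, probReal_univ]
  have sB : ∑ j, P.real (B j) = 1 := by
    rw [← measureReal_iUnion_fintype dB fun i => hB _ (hBm i), uB, probReal_univ]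
  have sAB : ∀ i, ∑ j, P.real (A i ∩ B j) = P.real (A i) := fun i => by
    rw [← measureReal_iUnion_fintype
      (fun j j' h => (dB h).mono Set.inter_subset_right Set.inter_subset_right)
      (fun j => (hA _ (hAm i)).inter (hB _ (hBm j))), ← Set.inter_iUnion, uB, Set.inter_univ]
  have : 2 * r ≤ ∑ i, ∑ j, (P.real (A i ∩ B j) + P.real (A i) * P.real (B j)) := by
    rw [hr]
    refine Finset.sum_le_sum fun i _ => Finset.sum_le_sum fun j _ => ?_
    have h1 : 0 ≤ P.real (A i ∩ B j) := measureReal_nonneg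
    have h2 : 0 ≤ P.real (A i) * P.real (B j) := mul_nonneg measureReal_nonneg measureReal_nonneg
    change |P.real (A i ∩ B j) - P.real (A i) * P.real (B j)| ≤ _
    rw [abs_le]; constructor <;> linarith
  simp only [Finset.sum_add_distrib, ← Finset.mul_sum, sB, sAB, sA, mul_one] at this
  linarith

/-- The signed discrepancy between the joint law and the product law over any union of cells of a
finite product partition is at most `β`, because the discrepancies of all cells sum to zero. -/
lemma sum_discrepancy_le {Ω : Type} {mA mB : MeasurableSpace Ω} [m0 : MeasurableSpace Ω]
    (P : Measure Ω) [IsProbabilityMeasure P] (hA : mA ≤ m0) (hB : mB ≤ m0)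
    {I J : Type} [Fintype I] [Fintype J] (f : Ω → I) (g : Ω → J)
    (hf : ∀ i, MeasurableSet[mA] (f ⁻¹' {i})) (hg : ∀ j, MeasurableSet[mB] (g ⁻¹' {j}))
    (S : Finset (I × J)) :
    ∑ p ∈ S, (P.real (f ⁻¹' {p.1} ∩ g ⁻¹' {p.2}) - P.real (f ⁻¹' {p.1}) * P.real (g ⁻¹' {p.2}))
      ≤ betaCoef P mA mB := by
  classical
  have dA : Pairwise (Function.onFun Disjoint fun i => f ⁻¹' {i}) := fun i j h =>
    Disjoint.preimage _ (by simpa using h)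
  have dB : Pairwise (Function.onFun Disjoint fun i => g ⁻¹' {i}) := fun i j h =>
    Disjoint.preimage _ (by simpa using h)
  have uA : (⋃ i, f ⁻¹' {i}) = Set.univ := by ext; simp
  have uB : (⋃ i, g ⁻¹' {i}) = Set.univ := by ext; simp
  have sA : ∑ i, P.real (f ⁻¹' {i}) = 1 := by
    rw [← measureReal_iUnion_fintype dA fun i => hA _ (hf i), uA, probReal_univ]
  have sB : ∑ j, P.real (g ⁻¹' {j}) = 1 := by
    rw [← measureReal_iUnion_fintype dB fun i => hB _ (hg i), uB, probReal_univ]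
  have sAB : ∀ i, ∑ j, P.real (f ⁻¹' {i} ∩ g ⁻¹' {j}) = P.real (f ⁻¹' {i}) := fun i => by
    rw [← measureReal_iUnion_fintype
      (fun j j' h => (dB h).mono Set.inter_subset_right Set.inter_subset_right)
      (fun j => (hA _ (hf i)).inter (hB _ (hg j))), ← Set.inter_iUnion, uB, Set.inter_univ]
  set a : I × J → ℝ := fun p =>
    P.real (f ⁻¹' {p.1} ∩ g ⁻¹' {p.2}) - P.real (f ⁻¹' {p.1}) * P.real (g ⁻¹' {p.2}) with ha
  have h0 : ∑ p, a p = 0 := by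
    simp only [ha, Fintype.sum_prod_type, Finset.sum_sub_distrib, ← Finset.mul_sum, sAB, sB, sA,
      mul_one, sub_self]
  have hle : (∑ p, |a p|) / 2 ≤ betaCoef P mA mB := by
    refine le_csSup (bddAbove_betaCoef P hA hB)
      ⟨Fintype.card I, Fintype.card J, fun i => f ⁻¹' {(Fintype.equivFin I).symm i},
        fun j => g ⁻¹' {(Fintype.equivFin J).symm j}, fun i => hf _, fun j => hg _,
        fun i j h => dA (by simpa using h), fun i j h => dB (by simpa using h), ?_, ?_, ?_⟩
    · rw [← uA]; exact (Fintype.equivFin I).symm.surjective.iUnion_comp fun i => f ⁻¹' {i}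
    · rw [← uB]; exact (Fintype.equivFin J).symm.surjective.iUnion_comp fun i => g ⁻¹' {i}
    · rw [mul_div_cancel₀ _ (two_ne_zero), Fintype.sum_prod_type]
      rw [← (Fintype.equivFin I).symm.sum_comp]
      refine Finset.sum_congr rfl fun i _ => ?_
      rw [← (Fintype.equivFin J).symm.sum_comp]
      rfl
  have h1 : ∑ p ∈ S, a p ≤ ∑ p ∈ S, |a p| := Finset.sum_le_sum fun p _ => le_abs_self _
  have h2 : - ∑ p ∈ Sᶜ, a p ≤ ∑ p ∈ Sᶜ, |a p| := by
    rw [← Finset.sum_neg_distrib]; exact Finset.sum_le_sum fun p _ => neg_le_abs _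
  have h3 := Finset.sum_add_sum_compl S a
  have h4 := Finset.sum_add_sum_compl S fun p => |a p|
  linarith

lemma betaCoef_nonneg {Ω : Type} {mA mB : MeasurableSpace Ω} [m0 : MeasurableSpace Ω]
    (P : Measure Ω) [IsProbabilityMeasure P] (hA : mA ≤ m0) (hB : mB ≤ m0) :
    0 ≤ betaCoef P mA mB := by
  simpa using sum_discrepancy_le P hA hB (fun _ : Ω => ()) (fun _ : Ω => ())
    (fun _ => by simp) (fun _ => by simp) ∅

/-- The sets that are unions of cells of a finite measurable product partition. -/
def gridSets (α γ : Type*) [MeasurableSpace α] [MeasurableSpace γ] : Set (Set (α × γ)) :=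
  {D | ∃ (I J : Type) (_ : Fintype I) (_ : Fintype J) (f : α → I) (g : γ → J) (S : Set (I × J)),
    (∀ i, MeasurableSet (f ⁻¹' {i})) ∧ (∀ j, MeasurableSet (g ⁻¹' {j})) ∧
    D = Prod.map f g ⁻¹' S}

lemma isSetAlgebra_gridSets (α γ : Type*) [MeasurableSpace α] [MeasurableSpace γ] :
    IsSetAlgebra (gridSets α γ) where
  empty_mem := ⟨Unit, Unit, inferInstance, inferInstance, fun _ => (), fun _ => (), ∅,
    fun _ => by simp, fun _ => by simp, by simp⟩
  compl_mem := by
    rintro _ ⟨I, J, _, _, f, g, S, hf, hg, rfl⟩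
    exact ⟨I, J, inferInstance, inferInstance, f, g, Sᶜ, hf, hg, rfl⟩
  union_mem := by
    rintro _ _ ⟨I, J, _, _, f, g, S, hf, hg, rfl⟩ ⟨I', J', _, _, f', g', S', hf', hg', rfl⟩
    refine ⟨I × I', J × J', inferInstance, inferInstance, fun x => (f x, f' x),
      fun y => (g y, g' y), {p | (p.1.1, p.2.1) ∈ S ∨ (p.1.2, p.2.2) ∈ S'}, ?_, ?_, rfl⟩
    · rintro ⟨i, i'⟩
      convert (hf i).inter (hf' i') using 1
      ext; simp
    · rintro ⟨i, i'⟩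
      convert (hg i).inter (hg' i') using 1
      ext; simp

lemma preimage_grid_eq {α γ I J : Type*} (f : α → I) (g : γ → J) (S : Finset (I × J)) :
    Prod.map f g ⁻¹' (S : Set (I × J)) = ⋃ p ∈ S, (f ⁻¹' {p.1}) ×ˢ (g ⁻¹' {p.2}) := by
  ext ⟨x, y⟩
  simp

/-- Grid sets generate the product σ-algebra, so they approximate every measurable set of the
product in measure. -/
lemma generateFrom_gridSets (α γ : Type*) [MeasurableSpace α] [MeasurableSpace γ] :
    (Prod.instMeasurableSpace : MeasurableSpace (α × γ)) =
      MeasurableSpace.generateFrom (gridSets α γ) := by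
  classical
  apply le_antisymm
  · rw [← generateFrom_prod]
    refine MeasurableSpace.generateFrom_mono ?_
    rintro _ ⟨A, hA, B, hB, rfl⟩
    refine ⟨Bool, Bool, inferInstance, inferInstance, fun x => decide (x ∈ A),
      fun y => decide (y ∈ B), {(true, true)}, ?_, ?_, by ext ⟨x, y⟩; simp [Prod.ext_iff]⟩
    · rintro (_ | _)
      · refine Eq.mp (congrArg _ ?_) (MeasurableSet.compl hA); ext; simp
      · refine Eq.mp (congrArg _ ?_) hA; ext; simp
    · rintro (_ | _)
      · refine Eq.mp (congrArg _ ?_) (MeasurableSet.compl hB); ext; simp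
      · refine Eq.mp (congrArg _ ?_) hB; ext; simp
  · refine MeasurableSpace.generateFrom_le ?_
    rintro _ ⟨I, J, _, _, f, g, S, hf, hg, rfl⟩
    have := preimage_grid_eq f g S.toFinset
    rw [Set.coe_toFinset] at this
    rw [this]
    exact Finset.measurableSet_biUnion _ fun p _ => (hf _).prod (hg _)

lemma measureReal_grid {α γ I J : Type*} [MeasurableSpace α] [MeasurableSpace γ]
    (κ : Measure (α × γ)) [IsFiniteMeasure κ] (f : α → I) (g : γ → J)
    (hf : ∀ i, MeasurableSet (f ⁻¹' {i})) (hg : ∀ j, MeasurableSet (g ⁻¹' {j}))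
    (S : Finset (I × J)) :
    κ.real (Prod.map f g ⁻¹' (S : Set (I × J)))
      = ∑ p ∈ S, κ.real ((f ⁻¹' {p.1}) ×ˢ (g ⁻¹' {p.2})) := by
  rw [preimage_grid_eq, measureReal_biUnion_finset ?_ fun p _ => (hf _).prod (hg _)]
  rintro ⟨i, j⟩ - ⟨i', j'⟩ - h
  simp only [Function.onFun]
  rw [Set.disjoint_left]
  rintro ⟨x, y⟩ ⟨h1, h2⟩ ⟨h3, h4⟩
  simp at h1 h2 h3 h4
  exact h (by simp [← h1, ← h2, h3, h4])

/-- Replacing the joint law of a past-measurable and a future-measurable variable by the product of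
its marginals costs at most the mixing coefficient. -/
lemma prob_le_prod_add_betaCoef {Ω : Type} {α γ : Type*} {mA mB : MeasurableSpace Ω}
    [m0 : MeasurableSpace Ω] [MeasurableSpace α] [MeasurableSpace γ]
    (P : Measure Ω) [IsProbabilityMeasure P] (hA : mA ≤ m0) (hB : mB ≤ m0)
    (U : Ω → α) (V : Ω → γ) (hU : Measurable[mA] U) (hV : Measurable[mB] V)
    (C : Set (α × γ)) (hC : MeasurableSet C) :
    P.real {ω | (U ω, V ω) ∈ C} ≤ ((P.map U).prod (P.map V)).real C + betaCoef P mA mB := by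
  have hU' : Measurable U := hU.mono hA le_rfl
  have hV' : Measurable V := hV.mono hB le_rfl
  have := Measure.isProbabilityMeasure_map (μ := P) hU'.aemeasurable
  have := Measure.isProbabilityMeasure_map (μ := P) hV'.aemeasurable
  set μ := P.map fun ω => (U ω, V ω) with hμ
  have := Measure.isProbabilityMeasure_map (μ := P) (hU'.prodMk hV').aemeasurable
  set π := (P.map U).prod (P.map V) with hπ
  have hgrid : ∀ D ∈ gridSets α γ, μ.real D ≤ π.real D + betaCoef P mA mB := by
    rintro _ ⟨I, J, _, _, f, g, S, hf, hg, rfl⟩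
    classical
    have key := sum_discrepancy_le P hA hB (f ∘ U) (g ∘ V) (fun i => hU (hf i))
      (fun j => hV (hg j)) S.toFinset
    have k1 : ∀ i j, μ.real ((f ⁻¹' {i}) ×ˢ (g ⁻¹' {j}))
        = P.real ((f ∘ U) ⁻¹' {i} ∩ (g ∘ V) ⁻¹' {j}) := fun i j => by
      rw [hμ, map_measureReal_apply (hU'.prodMk hV') ((hf _).prod (hg _))]
      rfl
    have k2 : ∀ i j, π.real ((f ⁻¹' {i}) ×ˢ (g ⁻¹' {j}))
        = P.real ((f ∘ U) ⁻¹' {i}) * P.real ((g ∘ V) ⁻¹' {j}) := fun i j => by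
      rw [hπ, measureReal_prod_prod, map_measureReal_apply hU' (hf _),
        map_measureReal_apply hV' (hg _)]
      rfl
    rw [← Set.coe_toFinset S, measureReal_grid μ f g hf hg, measureReal_grid π f g hf hg]
    simp only [k1, k2]
    rw [Finset.sum_sub_distrib] at key
    linarith
  have e : P.real {ω | (U ω, V ω) ∈ C} = μ.real C :=
    (map_measureReal_apply (hU'.prodMk hV') hC).symm
  rw [e]
  refine le_of_forall_pos_le_add fun ε hε => ?_
  obtain ⟨D, hD, hlt⟩ := exists_measure_symmDiff_lt_of_generateFrom_isSetRing (μ := μ + π)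
    (isSetAlgebra_gridSets α γ).isSetRing
    ⟨{Set.univ}, by simp, by simpa using (isSetAlgebra_gridSets α γ).univ_mem, by simp⟩
    (generateFrom_gridSets α γ) hC (ε := ENNReal.ofReal ε) (by simpa using hε)
  have hlt' : (μ + π).real (symmDiff D C) < ε := by
    rw [Measure.real]
    exact (ENNReal.lt_ofReal_iff_toReal_lt (measure_ne_top _ _)).1 hlt
  rw [measureReal_add_apply] at hlt'
  have h1 : μ.real C ≤ μ.real D + μ.real (symmDiff D C) :=
    (measureReal_mono (by intro x hx; by_cases h : x ∈ D <;> simp [Set.mem_symmDiff, h, hx])).trans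
      (measureReal_union_le _ _)
  have h2 : π.real D ≤ π.real C + π.real (symmDiff D C) :=
    (measureReal_mono (by intro x hx; by_cases h : x ∈ C <;> simp [Set.mem_symmDiff, h, hx])).trans
      (measureReal_union_le _ _)
  linarith [hgrid D hD]
end

/-! ### Alternating blocks -/

section
open scoped ENNReal

variable {E : Type} {d1 d2 : ℕ}

/-- The sum of `f` over the block of `q` consecutive times `c + 1, …, c + q` of a path. -/
def blockSum (f : E → Fin d1 → Fin d2 → ℝ) (q : ℕ) (c : ℤ) (x : ℤ → E) : Fin d1 → Fin d2 → ℝ :=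
  ∑ l ∈ Finset.range q, f (x (c + 1 + l))

/-- The sum of `j` blocks of length `q`, starting after time `p`, consecutive ones separated by a
gap of length `q`. -/
def altSum (f : E → Fin d1 → Fin d2 → ℝ) (q : ℕ) (p : ℤ) (j : ℕ) (x : ℤ → E) :
    Fin d1 → Fin d2 → ℝ :=
  ∑ l ∈ Finset.range j, blockSum f q (p + 2 * q * l) x

lemma blockSum_shift (f : E → Fin d1 → Fin d2 → ℝ) (q : ℕ) (c k : ℤ) (x : ℤ → E) :
    blockSum f q c (fun i => x (i + k)) = blockSum f q (c + k) x := by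
  refine Finset.sum_congr rfl fun l _ => ?_
  beta_reduce
  rw [show c + 1 + (l : ℤ) + k = c + k + 1 + l by ring]

lemma altSum_shift (f : E → Fin d1 → Fin d2 → ℝ) (q : ℕ) (p k : ℤ) (j : ℕ) (x : ℤ → E) :
    altSum f q p j (fun i => x (i + k)) = altSum f q (p + k) j x := by
  refine Finset.sum_congr rfl fun l _ => ?_
  rw [blockSum_shift, show p + 2 * q * (l : ℤ) + k = p + k + 2 * q * l by ring]

/-- Each variable is measurable for the σ-algebra generated by the family it belongs to. -/
lemma measurable_past {Ω : Type} [MeasurableSpace E] (X : ℤ → Ω → E) (s : ℤ → Prop) {i : ℤ}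
    (hi : s i) :
    Measurable[⨆ i : {i : ℤ // s i}, MeasurableSpace.comap (X i.1) inferInstance] (X i) :=
  (comap_measurable (X i)).mono
    (le_iSup (fun i : {i : ℤ // s i} => MeasurableSpace.comap (X i.1) inferInstance) ⟨i, hi⟩) le_rfl

lemma measurable_blockSum {Ω : Type} [MeasurableSpace E] (m : MeasurableSpace Ω) (X : ℤ → Ω → E)
    (f : E → Fin d1 → Fin d2 → ℝ) (hf : Measurable f) (q : ℕ) (c : ℤ)
    (h : ∀ i, c + 1 ≤ i → i ≤ c + q → Measurable[m] (X i)) :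
    Measurable[m] fun ω => blockSum f q c fun i => X i ω := by
  unfold blockSum
  refine Finset.measurable_fun_sum _ fun l hl => hf.comp (h _ (by omega) ?_)
  have := Finset.mem_range.1 hl
  omega

/-- The alternating blocks only look at times up to `p + 2 q j - q`, the end of the last block. -/
lemma measurable_altSum {Ω : Type} [MeasurableSpace E] (m : MeasurableSpace Ω) (X : ℤ → Ω → E)
    (f : E → Fin d1 → Fin d2 → ℝ) (hf : Measurable f) (q : ℕ) (p : ℤ) (j : ℕ)
    (h : ∀ i, i ≤ p + 2 * q * j - q → Measurable[m] (X i)) :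
    Measurable[m] fun ω => altSum f q p j fun i => X i ω := by
  unfold altSum
  refine Finset.measurable_fun_sum _ fun l hl => ?_
  refine measurable_blockSum m X f hf q _ fun i _ hi => h i ?_
  have : (l : ℤ) + 1 ≤ j := by exact_mod_cast Finset.mem_range.1 hl
  nlinarith

variable {Ω : Type} [MeasurableSpace Ω] [MeasurableSpace E] (P : Measure Ω) [IsProbabilityMeasure P]
  (X : ℤ → Ω → E) (hX : ∀ i, Measurable (X i))
  (hstat : ∀ k : ℤ, Measure.map (fun ω => fun i : ℤ => X (i + k) ω) P
      = Measure.map (fun ω => fun i : ℤ => X i ω) P)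
include hX hstat

omit [IsProbabilityMeasure P] in
lemma map_shift {β : Type*} [MeasurableSpace β] (F : (ℤ → E) → β) (hF : Measurable F) (k : ℤ) :
    P.map (fun ω => F fun i => X (i + k) ω) = P.map (fun ω => F fun i => X i ω) := by
  have h := congrArg (fun κ => Measure.map F κ) (hstat k)
  rwa [Measure.map_map hF (by fun_prop), Measure.map_map hF (by fun_prop)] at h

/-- Blocks separated by gaps of length `q` behave like independent ones, up to an additive error
of one mixing coefficient per block. -/
lemma altSum_le_convPow (f : E → Fin d1 → Fin d2 → ℝ) (hf : Measurable f) (q : ℕ) (j : ℕ) :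
    ∀ (p : ℤ) (C : Set (Fin d1 → Fin d2 → ℝ)), MeasurableSet C →
      P.map (fun ω => altSum f q p j fun i => X i ω) C
        ≤ convPow (P.map fun ω => blockSum f q 0 fun i => X i ω) j C
          + ENNReal.ofReal (j * processBeta P X q) := by
  set ν := P.map fun ω => blockSum f q 0 fun i => X i ω with hν
  have hA : (⨆ i : {i : ℤ // i ≤ 0}, MeasurableSpace.comap (X i.1) inferInstance)
      ≤ ‹MeasurableSpace Ω› := iSup_le fun i => (hX i).comap_le
  have hB : (⨆ i : {i : ℤ // (q : ℤ) ≤ i}, MeasurableSpace.comap (X i.1) inferInstance)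
      ≤ ‹MeasurableSpace Ω› := iSup_le fun i => (hX i).comap_le
  have hβ : 0 ≤ processBeta P X q := betaCoef_nonneg P hA hB
  have hbm : ∀ c : ℤ, Measurable fun x : ℤ → E => blockSum f q c x := fun c =>
    measurable_blockSum inferInstance (fun i (x : ℤ → E) => x i) f hf q c fun i _ _ => measurable_pi_apply i
  have ham : ∀ (p : ℤ) (j : ℕ), Measurable fun x : ℤ → E => altSum f q p j x := fun p j =>
    measurable_altSum inferInstance (fun i (x : ℤ → E) => x i) f hf q p j fun i _ => measurable_pi_apply i
  have hXm : Measurable fun ω => fun i => X i ω := measurable_pi_lambda _ hX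
  have hνp : IsProbabilityMeasure ν :=
    Measure.isProbabilityMeasure_map ((hbm 0).comp hXm).aemeasurable
  induction j with
  | zero =>
    intro p C hC
    have : (fun ω => altSum f q p 0 fun i => X i ω) = fun _ => 0 := by ext; simp [altSum]
    rw [this, Measure.map_const, measure_univ, one_smul]
    simp [convPow]
  | succ j ih =>
    intro p C hC
    -- Shifting time by `k` puts the first `j` blocks in the past of `0` and the last after `q`.
    set k : ℤ := p + 2 * q * j - q with hk
    set p' : ℤ := q - 2 * q * j with hp'
    have e1 : P.map (fun ω => altSum f q p (j + 1) fun i => X i ω)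
        = P.map (fun ω => altSum f q p' j (fun i => X i ω) + blockSum f q q fun i => X i ω) := by
      rw [← map_shift P X hX hstat (fun x => altSum f q p' j x + blockSum f q q x)
        ((ham p' j).add (hbm q)) k]
      congr 1
      ext1 ω
      rw [altSum_shift f q p' k j fun i => X i ω, blockSum_shift f q q k fun i => X i ω,
        show p' + k = p by rw [hp', hk]; ring, show (q : ℤ) + k = p + 2 * q * j by rw [hk]; ring,
        altSum, Finset.sum_range_succ, altSum]
    have e2 : P.map (fun ω => blockSum f q q fun i => X i ω) = ν := by
      rw [hν, ← map_shift P X hX hstat (blockSum f q 0) (hbm 0) q]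
      congr 1
      ext1 ω
      rw [blockSum_shift f q 0 q fun i => X i ω, zero_add]
    set C' : Set ((Fin d1 → Fin d2 → ℝ) × (Fin d1 → Fin d2 → ℝ)) :=
      (fun p => p.1 + p.2) ⁻¹' C with hC'
    have hC'm : MeasurableSet C' := (measurable_fst.add measurable_snd) hC
    have mU : Measurable fun ω => altSum f q p' j fun i => X i ω := (ham p' j).comp hXm
    have mV : Measurable fun ω => blockSum f q q fun i => X i ω := (hbm q).comp hXm
    have := Measure.isProbabilityMeasure_map (μ := P) mU.aemeasurable
    have main := prob_le_prod_add_betaCoef P hA hB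
      (fun ω => altSum f q p' j fun i => X i ω) (fun ω => blockSum f q q fun i => X i ω)
      (measurable_altSum _ X f hf q p' j fun i hi => measurable_past X (fun i => i ≤ 0) (by omega))
      (measurable_blockSum _ X f hf q q fun i hi _ =>
        measurable_past X (fun i => (q : ℤ) ≤ i) (by omega)) C' hC'm
    rw [e2] at main
    have mUV : Measurable fun ω =>
      altSum f q p' j (fun i => X i ω) + blockSum f q q fun i => X i ω := mU.add mV
    rw [e1, Measure.map_apply mUV hC]
    have main' : P ((fun ω => altSum f q p' j (fun i => X i ω) + blockSum f q q fun i => X i ω) ⁻¹' C)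
        ≤ ((P.map fun ω => altSum f q p' j fun i => X i ω).prod ν) C'
          + ENNReal.ofReal (processBeta P X q) := by
      rw [← ENNReal.ofReal_toReal (measure_ne_top P _),
        ← ENNReal.ofReal_toReal (measure_ne_top (Measure.prod _ ν) C'),
        ← ENNReal.ofReal_add ENNReal.toReal_nonneg hβ]
      exact ENNReal.ofReal_le_ofReal main
    refine main'.trans ?_
    have e3 : convPow ν (j + 1) C = ((convPow ν j).prod ν) C' := by
      rw [convPow, Measure.map_apply (by fun_prop) hC]
    rw [e3, Measure.prod_apply_symm hC'm, Measure.prod_apply_symm hC'm, Nat.cast_succ, add_mul,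
      one_mul, ENNReal.ofReal_add (by positivity) hβ, ← add_assoc]
    gcongr
    calc _ ≤ ∫⁻ y, (convPow ν j ((fun x => (x, y)) ⁻¹' C')
            + ENNReal.ofReal (j * processBeta P X q)) ∂ν :=
          lintegral_mono fun y => ih p' _ (measurable_prodMk_right hC'm)
      _ = _ := by
          rw [lintegral_add_right _ measurable_const, lintegral_const, measure_univ, mul_one]
end

/-! ### Moments of blocks and the blocking decomposition -/

section
variable {Ω E : Type} {d1 d2 : ℕ}

section
open scoped Matrix.Norms.L2Operator

lemma specNorm_sum_le {m n : ℕ} {ι : Type*} (s : Finset ι) (A : ι → Matrix (Fin m) (Fin n) ℝ) :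
    specNorm (∑ i ∈ s, A i) ≤ ∑ i ∈ s, specNorm (A i) := by
  simp only [specNorm_eq]
  exact norm_sum_le _ _

lemma specNorm_add_le {m n : ℕ} (A B : Matrix (Fin m) (Fin n) ℝ) :
    specNorm (A + B) ≤ specNorm A + specNorm B := by
  simp only [specNorm_eq]
  exact norm_add_le _ _
end

lemma of_sum {m n : ℕ} {ι : Type*} (s : Finset ι) (A : ι → Fin m → Fin n → ℝ) :
    Matrix.of (∑ i ∈ s, A i) = ∑ i ∈ s, Matrix.of (A i) := by
  ext a b
  simp [Matrix.sum_apply, Finset.sum_apply]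

lemma specNorm_integral_sum_mul_le [MeasurableSpace Ω] {P : Measure Ω} {k l m : ℕ} (q : ℕ)
    (A : ℕ → Ω → Matrix (Fin k) (Fin l) ℝ) (B : ℕ → Ω → Matrix (Fin l) (Fin m) ℝ) (s2 : ℝ)
    (hInt : ∀ i j a b, Integrable (fun ω => (A i ω * B j ω) a b) P)
    (h : ∀ i ∈ Finset.range q, ∀ j ∈ Finset.range q,
      specNorm (Matrix.of fun a b => ∫ ω, (A i ω * B j ω) a b ∂P) ≤ s2) :
    specNorm (Matrix.of fun a b =>
      ∫ ω, ((∑ i ∈ Finset.range q, A i ω) * (∑ j ∈ Finset.range q, B j ω)) a b ∂P)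
        ≤ (q : ℝ) ^ 2 * s2 := by
  have e : (Matrix.of fun a b =>
      ∫ ω, ((∑ i ∈ Finset.range q, A i ω) * (∑ j ∈ Finset.range q, B j ω)) a b ∂P)
      = ∑ i ∈ Finset.range q, ∑ j ∈ Finset.range q,
        Matrix.of fun a b => ∫ ω, (A i ω * B j ω) a b ∂P := by
    ext a b
    have pt : ∀ ω, ((∑ i ∈ Finset.range q, A i ω) * (∑ j ∈ Finset.range q, B j ω)) a b
        = ∑ i ∈ Finset.range q, ∑ j ∈ Finset.range q, (A i ω * B j ω) a b := fun ω => by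
      simp only [Matrix.sum_mul, Matrix.mul_sum, Matrix.sum_apply]
      exact Finset.sum_comm
    simp only [Matrix.sum_apply, Matrix.of_apply]
    refine (integral_congr_ae (ae_of_all _ pt)).trans ?_
    refine (integral_finsetSum _ fun i _ => integrable_finsetSum _ fun j _ => hInt i j a b).trans ?_
    exact Finset.sum_congr rfl fun i _ => integral_finsetSum _ fun j _ => hInt i j a b
  rw [e]
  refine (specNorm_sum_le _ _).trans ?_
  calc _ ≤ ∑ i ∈ Finset.range q, ∑ j ∈ Finset.range q, s2 :=
        Finset.sum_le_sum fun i hi => (specNorm_sum_le _ _).trans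
          (Finset.sum_le_sum fun j hj => h i hi j hj)
    _ = _ := by simp; ring

variable [MeasurableSpace Ω] [MeasurableSpace E] (P : Measure Ω) [IsProbabilityMeasure P]
  (X : ℤ → Ω → E) (hX : ∀ i, Measurable (X i))
  (f : E → Fin d1 → Fin d2 → ℝ) (hf : Measurable f) (R : ℝ)
  (hR : ∀ i : ℤ, ∀ᵐ ω ∂P, specNorm (Matrix.of (f (X i ω))) ≤ R)
include hX hf hR

lemma integrable_entry (i : ℤ) (a : Fin d1) (b : Fin d2) :
    Integrable (fun ω => f (X i ω) a b) P := by
  have hm : Measurable fun ω => f (X i ω) a b := by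
    have := hf.comp (hX i)
    exact (measurable_pi_apply b).comp ((measurable_pi_apply a).comp this)
  refine Integrable.of_bound hm.aestronglyMeasurable R ?_
  filter_upwards [hR i] with ω h
  exact (abs_entry_le_specNorm (Matrix.of (f (X i ω))) a b).trans h

lemma integrable_entry_mul (i j : ℤ) (a a' : Fin d1) (b b' : Fin d2) :
    Integrable (fun ω => f (X i ω) a b * f (X j ω) a' b') P := by
  refine (integrable_entry P X hX f hf R hR j a' b').bdd_mul (c := R)
    (integrable_entry P X hX f hf R hR i a b).aestronglyMeasurable ?_
  filter_upwards [hR i] with ω h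
  exact (abs_entry_le_specNorm (Matrix.of (f (X i ω))) a b).trans h

omit hX hf [IsProbabilityMeasure P] [MeasurableSpace E] in
lemma ae_blockSum_le (q : ℕ) :
    ∀ᵐ ω ∂P, specNorm (Matrix.of (blockSum f q 0 fun i => X i ω)) ≤ q * R := by
  filter_upwards [ae_all_iff.2 hR] with ω h
  rw [blockSum, of_sum]
  refine (specNorm_sum_le _ _).trans ((Finset.sum_le_sum fun l _ => h _).trans ?_)
  simp

lemma integral_blockSum (hmean : ∀ (i : ℤ) a b, ∫ ω, f (X i ω) a b ∂P = 0) (q : ℕ)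
    (a : Fin d1) (b : Fin d2) :
    ∫ ω, blockSum f q 0 (fun i => X i ω) a b ∂P = 0 := by
  simp only [blockSum, Finset.sum_apply]
  rw [integral_finsetSum _ fun l _ => integrable_entry P X hX f hf R hR _ a b]
  simp [hmean]

/-- The second moment of a block of length `q` has norm at most `q² s2`, being a sum of `q²` cross
moments. -/
lemma specNorm_blockSum_mul_transpose (q : ℕ) (s2 : ℝ)
    (h : ∀ i ∈ Finset.Icc (1 : ℤ) q, ∀ j ∈ Finset.Icc (1 : ℤ) q,
      specNorm (Matrix.of fun a b =>
          ∫ ω, ((Matrix.of (f (X i ω))) * (Matrix.of (f (X j ω)))ᵀ) a b ∂P) ≤ s2) :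
    specNorm (Matrix.of fun a b => ∫ ω, (Matrix.of (blockSum f q 0 fun i => X i ω)
      * (Matrix.of (blockSum f q 0 fun i => X i ω))ᵀ) a b ∂P) ≤ (q : ℝ) ^ 2 * s2 := by
  simp only [blockSum, of_sum, Matrix.transpose_sum]
  refine specNorm_integral_sum_mul_le q (fun l ω => Matrix.of (f (X (0 + 1 + l) ω)))
    (fun l ω => (Matrix.of (f (X (0 + 1 + l) ω)))ᵀ) s2 (fun i j a b => ?_) fun i hi j hj => ?_
  · simp only [Matrix.mul_apply, Matrix.of_apply, Matrix.transpose_apply]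
    exact integrable_finsetSum _ fun _ _ => integrable_entry_mul P X hX f hf R hR _ _ _ _ _ _
  · rw [Finset.mem_range] at hi hj
    exact h _ (Finset.mem_Icc.2 ⟨by omega, by omega⟩) _ (Finset.mem_Icc.2 ⟨by omega, by omega⟩)

lemma specNorm_transpose_mul_blockSum (q : ℕ) (s2 : ℝ)
    (h : ∀ i ∈ Finset.Icc (1 : ℤ) q, ∀ j ∈ Finset.Icc (1 : ℤ) q,
      specNorm (Matrix.of fun a b =>
          ∫ ω, ((Matrix.of (f (X i ω)))ᵀ * (Matrix.of (f (X j ω)))) a b ∂P) ≤ s2) :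
    specNorm (Matrix.of fun a b => ∫ ω, ((Matrix.of (blockSum f q 0 fun i => X i ω))ᵀ
      * Matrix.of (blockSum f q 0 fun i => X i ω)) a b ∂P) ≤ (q : ℝ) ^ 2 * s2 := by
  simp only [blockSum, of_sum, Matrix.transpose_sum]
  refine specNorm_integral_sum_mul_le q (fun l ω => (Matrix.of (f (X (0 + 1 + l) ω)))ᵀ)
    (fun l ω => Matrix.of (f (X (0 + 1 + l) ω))) s2 (fun i j a b => ?_) fun i hi j hj => ?_
  · simp only [Matrix.mul_apply, Matrix.of_apply, Matrix.transpose_apply]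
    exact integrable_finsetSum _ fun _ _ => integrable_entry_mul P X hX f hf R hR _ _ _ _ _ _
  · rw [Finset.mem_range] at hi hj
    exact h _ (Finset.mem_Icc.2 ⟨by omega, by omega⟩) _ (Finset.mem_Icc.2 ⟨by omega, by omega⟩)

end

section
variable {E : Type} {d1 d2 : ℕ} (f : E → Fin d1 → Fin d2 → ℝ)

lemma sum_Icc_eq_blockSum (N : ℕ) (c d : ℤ) (hd : d = c + N) (x : ℤ → E) :
    ∑ i ∈ Finset.Icc (c + 1) d, f (x i) = blockSum f N c x := by
  subst hd
  symm
  refine Finset.sum_nbij (fun l : ℕ => c + 1 + (l : ℤ)) ?_ ?_ ?_ fun _ _ => rfl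
  · intro l hl
    have := Finset.mem_range.1 hl
    exact Finset.mem_Icc.2 ⟨by omega, by omega⟩
  · intro l _ l' _ h
    simpa using h
  · intro i hi
    have := Finset.mem_Icc.1 hi
    exact ⟨(i - c - 1).toNat, by simp; omega, by simp; omega⟩

lemma blockSum_add (a b : ℕ) (c : ℤ) (x : ℤ → E) :
    blockSum f (a + b) c x = blockSum f a c x + blockSum f b (c + a) x := by
  simp only [blockSum, Finset.sum_range_add]
  congr 1
  refine Finset.sum_congr rfl fun l _ => ?_
  rw [Nat.cast_add, show c + 1 + ((a : ℤ) + l) = c + a + 1 + l by ring]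

/-- Splitting a run of `m` blocks into the even-numbered and the odd-numbered ones. -/
lemma blockSum_mul_eq_altSum (q m : ℕ) (x : ℤ → E) :
    blockSum f (q * m) 0 x = altSum f q 0 ((m + 1) / 2) x + altSum f q q (m / 2) x := by
  induction m with
  | zero => simp [blockSum, altSum]
  | succ m ih =>
    rw [Nat.mul_succ, blockSum_add, ih]
    obtain ⟨j, rfl | rfl⟩ := m.even_or_odd'
    · rw [show (2 * j + 1 + 1) / 2 = j + 1 by omega, show (2 * j + 1) / 2 = j by omega,
        show 2 * j / 2 = j by omega, altSum.eq_1 f q 0 (j + 1), Finset.sum_range_succ,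
        ← altSum.eq_1, show (0 : ℤ) + ((q * (2 * j) : ℕ) : ℤ) = 0 + 2 * q * j by push_cast; ring]
      abel
    · rw [show (2 * j + 1 + 1 + 1) / 2 = j + 1 by omega, show (2 * j + 1 + 1) / 2 = j + 1 by omega,
        show (2 * j + 1) / 2 = j by omega, altSum.eq_1 f q q (j + 1), Finset.sum_range_succ,
        ← altSum.eq_1,
        show (0 : ℤ) + ((q * (2 * j + 1) : ℕ) : ℤ) = q + 2 * q * j by push_cast; ring]
      abel

/-- The blocking decomposition of `1, …, n` into the even-numbered blocks, the odd-numbered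
blocks and the remaining times. -/
lemma sum_Icc_eq_altSum (n q : ℕ) (x : ℤ → E) :
    ∑ i ∈ Finset.Icc (1 : ℤ) n, f (x i)
      = altSum f q 0 ((n / q + 1) / 2) x + altSum f q q (n / q / 2) x
        + ∑ i ∈ Finset.Icc ((q * (n / q) : ℕ) + 1 : ℤ) n, f (x i) := by
  have h : q * (n / q) ≤ n := Nat.mul_div_le n q
  rw [← blockSum_mul_eq_altSum, sum_Icc_eq_blockSum f (n - q * (n / q)) _ _ (by omega),
    show (1 : ℤ) = 0 + 1 by ring, sum_Icc_eq_blockSum f n 0 _ (by ring)]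
  have := blockSum_add f (q * (n / q)) (n - q * (n / q)) 0 x
  rwa [Nat.add_sub_cancel' h, zero_add] at this
end

/-! ### The Bernstein bound -/

section

/-- The arithmetic behind the exponent: with `θ = t / (3 D)`, `D` the Bernstein denominator, the
Laplace bound for `j ≤ n / q` blocks at level `2 t` gives at least the claimed decay. -/
lemma exponent_le {n q j t s2 R : ℝ} (hn : 0 ≤ n) (hq : 0 ≤ q) (hs : 0 ≤ s2) (hR : 0 ≤ R)
    (ht : 0 ≤ t) (hj : j * q ≤ n) {D θ : ℝ} (hD : D = n * q * s2 + q * R * t / 3) (hD0 : 0 < D)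
    (hθ : θ = t / (3 * D)) :
    θ * (q * R) ≤ 1 ∧
    -(θ * (2 * t)) + j * (θ ^ 2 * (q ^ 2 * s2)) ≤ -(t ^ 2 / 2) / D := by
  have h1 : j * q * (q * s2) ≤ n * (q * s2) := by gcongr
  have h2 : 0 ≤ q * R * t := by positivity
  have h3 : 0 ≤ n * q * s2 := by positivity
  have hθ0 : 0 ≤ θ := by rw [hθ]; positivity
  have hθD : θ * D = t / 3 := by rw [hθ]; field_simp
  constructor
  · rw [hθ, div_mul_eq_mul_div, div_le_one (by positivity)]
    linarith
  · have h4 : j * (θ ^ 2 * (q ^ 2 * s2)) ≤ θ ^ 2 * D := by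
      have : j * (q ^ 2 * s2) ≤ D := by linarith
      calc j * (θ ^ 2 * (q ^ 2 * s2)) = θ ^ 2 * (j * (q ^ 2 * s2)) := by ring
        _ ≤ _ := by gcongr
    have h5 : θ ^ 2 * D = θ * t / 3 := by rw [sq, mul_assoc, hθD]; ring
    have h6 : -(t ^ 2 / 2) / D = -(3 / 2 * (θ * t)) := by rw [hθ]; field_simp
    have h7 : 0 ≤ θ * t := by positivity
    linarith

variable {Ω E : Type} {d1 d2 : ℕ} [MeasurableSpace Ω] [MeasurableSpace E]

/-- The Bernstein bound for one of the two classes of alternating blocks. -/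
lemma altSum_tail (P : Measure Ω) [IsProbabilityMeasure P]
    (X : ℤ → Ω → E) (hX : ∀ i, Measurable (X i))
    (hstat : ∀ k : ℤ, Measure.map (fun ω => fun i : ℤ => X (i + k) ω) P
      = Measure.map (fun ω => fun i : ℤ => X i ω) P)
    (f : E → Fin d1 → Fin d2 → ℝ) (hf : Measurable f) (R : ℝ)
    (hR : ∀ i : ℤ, ∀ᵐ ω ∂P, specNorm (Matrix.of (f (X i ω))) ≤ R)
    (hmean : ∀ (i : ℤ) a b, ∫ ω, f (X i ω) a b ∂P = 0) (q : ℕ) (s2 : ℝ) (hs2 : 0 ≤ s2)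
    (h1 : ∀ i ∈ Finset.Icc (1 : ℤ) q, ∀ j ∈ Finset.Icc (1 : ℤ) q,
      specNorm (Matrix.of fun a b =>
          ∫ ω, ((Matrix.of (f (X i ω))) * (Matrix.of (f (X j ω)))ᵀ) a b ∂P) ≤ s2)
    (h2 : ∀ i ∈ Finset.Icc (1 : ℤ) q, ∀ j ∈ Finset.Icc (1 : ℤ) q,
      specNorm (Matrix.of fun a b =>
          ∫ ω, ((Matrix.of (f (X i ω)))ᵀ * (Matrix.of (f (X j ω)))) a b ∂P) ≤ s2)
    (hβ : 0 ≤ processBeta P X q) (hd : 0 < d1 + d2) (θ : ℝ) (hθ : 0 ≤ θ) (hθR : θ * (q * R) ≤ 1)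
    (p : ℤ) (j : ℕ) (u : ℝ) :
    P.real {ω | u ≤ specNorm (Matrix.of (altSum f q p j fun i => X i ω))}
      ≤ j * processBeta P X q
        + (d1 + d2) * Real.exp (-(θ * u) + j * (θ ^ 2 * ((q : ℝ) ^ 2 * s2))) := by
  have hbm : Measurable fun ω => blockSum f q 0 fun i => X i ω :=
    measurable_blockSum inferInstance X f hf q 0 fun i _ _ => hX i
  have ham : Measurable fun ω => altSum f q p j fun i => X i ω :=
    measurable_altSum inferInstance X f hf q p j fun i _ => hX i
  have hsm : Measurable fun x : Fin d1 → Fin d2 → ℝ => specNorm (Matrix.of x) :=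
    continuous_specNorm_of.measurable
  set ν := P.map fun ω => blockSum f q 0 fun i => X i ω with hν
  have : IsProbabilityMeasure ν := Measure.isProbabilityMeasure_map hbm.aemeasurable
  set C : Set (Fin d1 → Fin d2 → ℝ) := {x | u ≤ specNorm (Matrix.of x)} with hC
  have hCm : MeasurableSet C := measurableSet_le measurable_const hsm
  have hent : ∀ a b, Measurable fun x : Fin d1 → Fin d2 → ℝ => x a b := fun a b => by fun_prop
  have tail := tail_convPow ν (q * R) ((q : ℝ) ^ 2 * s2) θ hθ hθR (by positivity)
    ((ae_map_iff hbm.aemeasurable (measurableSet_le hsm measurable_const)).2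
      (ae_blockSum_le P X f R hR q))
    (fun a b => by
      rw [hν, integral_map hbm.aemeasurable (hent a b).aestronglyMeasurable]
      exact integral_blockSum P X hX f hf R hR hmean q a b)
    (by
      have e : ∀ a b, ∫ x, (Matrix.of x * (Matrix.of x)ᵀ) a b ∂ν
          = ∫ ω, (Matrix.of (blockSum f q 0 fun i => X i ω)
            * (Matrix.of (blockSum f q 0 fun i => X i ω))ᵀ) a b ∂P := fun a b => by
        rw [hν, integral_map hbm.aemeasurable]
        refine Measurable.aestronglyMeasurable ?_
        simp only [Matrix.mul_apply, Matrix.of_apply, Matrix.transpose_apply]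
        exact Finset.measurable_fun_sum _ fun c _ => (hent _ _).mul (hent _ _)
      simp only [e]
      exact specNorm_blockSum_mul_transpose P X hX f hf R hR q s2 h1)
    (by
      have e : ∀ a b, ∫ x, ((Matrix.of x)ᵀ * Matrix.of x) a b ∂ν
          = ∫ ω, ((Matrix.of (blockSum f q 0 fun i => X i ω))ᵀ
            * Matrix.of (blockSum f q 0 fun i => X i ω)) a b ∂P := fun a b => by
        rw [hν, integral_map hbm.aemeasurable]
        refine Measurable.aestronglyMeasurable ?_
        simp only [Matrix.mul_apply, Matrix.of_apply, Matrix.transpose_apply]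
        exact Finset.measurable_fun_sum _ fun c _ => (hent _ _).mul (hent _ _)
      simp only [e]
      exact specNorm_transpose_mul_blockSum P X hX f hf R hR q s2 h2)
    hd j u
  have mix := altSum_le_convPow P X hX hstat f hf q j p C hCm
  rw [← hν, Measure.map_apply ham hCm] at mix
  have mix' := ENNReal.toReal_mono (by finiteness) mix
  rw [ENNReal.toReal_add (by finiteness) (by finiteness), ENNReal.toReal_ofReal (by positivity)]
    at mix'
  change P.real ((fun ω => altSum f q p j fun i => X i ω) ⁻¹' C) ≤ (convPow ν j).real C + _ at mix'
  change P.real ((fun ω => altSum f q p j fun i => X i ω) ⁻¹' C) ≤ _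
  linarith
end

/-- Bernstein-type inequality for β-mixing sequences of random
matrices, via Berbee coupling and blocking. -/
theorem stmt5 {Ω E : Type} [MeasurableSpace Ω] [MeasurableSpace E]
    (P : Measure Ω) [IsProbabilityMeasure P]
    (X : ℤ → Ω → E) (hXmeas : ∀ i, Measurable (X i))
    (hstat : ∀ k : ℤ, Measure.map (fun ω => fun i : ℤ => X (i + k) ω) P
      = Measure.map (fun ω => fun i : ℤ => X i ω) P)
    (n q d1 d2 : ℕ) (hn : 1 ≤ n) (hq : 1 ≤ q) (hqn : 2 * q ≤ n)
    (Ξn : E → Fin d1 → Fin d2 → ℝ) (hΞmeas : Measurable Ξn)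
    (hmean : ∀ (i : ℤ) (a : Fin d1) (b : Fin d2), ∫ ω, Ξn (X i ω) a b ∂P = 0)
    (R : ℝ) (hR : ∀ i : ℤ, ∀ᵐ ω ∂P, specNorm (Matrix.of (Ξn (X i ω))) ≤ R)
    (s2 : ℝ)
    (hs2ub : ∀ i ∈ Finset.Icc (1 : ℤ) n, ∀ j ∈ Finset.Icc (1 : ℤ) n,
      max
        (specNorm (Matrix.of fun a b =>
          ∫ ω, ((Matrix.of (Ξn (X i ω))) * (Matrix.of (Ξn (X j ω)))ᵀ) a b ∂P))
        (specNorm (Matrix.of fun a b =>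
          ∫ ω, ((Matrix.of (Ξn (X i ω)))ᵀ * (Matrix.of (Ξn (X j ω)))) a b ∂P)) ≤ s2)
    (hs2att : ∃ i ∈ Finset.Icc (1 : ℤ) n, ∃ j ∈ Finset.Icc (1 : ℤ) n,
      s2 = max
        (specNorm (Matrix.of fun a b =>
          ∫ ω, ((Matrix.of (Ξn (X i ω))) * (Matrix.of (Ξn (X j ω)))ᵀ) a b ∂P))
        (specNorm (Matrix.of fun a b =>
          ∫ ω, ((Matrix.of (Ξn (X i ω)))ᵀ * (Matrix.of (Ξn (X j ω)))) a b ∂P))) :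
    ∀ t : ℝ, 0 ≤ t →
      (P {ω | 6 * t ≤ specNorm
          (∑ i ∈ Finset.Icc (1 : ℤ) n, Matrix.of (Ξn (X i ω)))}).toReal
        ≤ (n : ℝ) / q * processBeta P X q
          + (P {ω | t ≤ specNorm
              (∑ i ∈ Finset.Icc ((q * (n / q) : ℕ) + 1 : ℤ) (n : ℤ),
                Matrix.of (Ξn (X i ω)))}).toReal
          + 2 * (d1 + d2) * Real.exp (-(t ^ 2 / 2) / (n * q * s2 + q * R * t / 3)) := by
  intro t ht
  classical
  have hA : (⨆ i : {i : ℤ // i ≤ 0}, MeasurableSpace.comap (X i.1) inferInstance)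
      ≤ ‹MeasurableSpace Ω› := iSup_le fun i => (hXmeas i).comap_le
  have hB : (⨆ i : {i : ℤ // (q : ℤ) ≤ i}, MeasurableSpace.comap (X i.1) inferInstance)
      ≤ ‹MeasurableSpace Ω› := iSup_le fun i => (hXmeas i).comap_le
  have hβ : 0 ≤ processBeta P X q := betaCoef_nonneg P hA hB
  have hs2 : 0 ≤ s2 := by
    obtain ⟨i, _, j, _, rfl⟩ := hs2att
    exact le_max_of_le_left (specNorm_nonneg _)
  have hR0 : 0 ≤ R := by
    obtain ⟨ω, hω⟩ := (hR 0).exists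
    exact (specNorm_nonneg _).trans hω
  have hn0 : (0 : ℝ) ≤ n := Nat.cast_nonneg n
  have hq0 : (0 : ℝ) < q := by exact_mod_cast hq
  set rem : Ω → Matrix (Fin d1) (Fin d2) ℝ := fun ω =>
    ∑ i ∈ Finset.Icc ((q * (n / q) : ℕ) + 1 : ℤ) (n : ℤ), Matrix.of (Ξn (X i ω)) with hrem
  set D := (n : ℝ) * q * s2 + q * R * t / 3 with hD
  have hD0 : 0 ≤ D := by positivity
  change P.real {ω | 6 * t ≤ specNorm (∑ i ∈ Finset.Icc (1 : ℤ) n, Matrix.of (Ξn (X i ω)))}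
    ≤ n / q * processBeta P X q + P.real {ω | t ≤ specNorm (rem ω)}
      + 2 * (d1 + d2) * Real.exp (-(t ^ 2 / 2) / D)
  have hT1 : 0 ≤ (n : ℝ) / q * processBeta P X q := by positivity
  have hT2 : 0 ≤ P.real {ω | t ≤ specNorm (rem ω)} := measureReal_nonneg
  have hT3 : 0 ≤ 2 * ((d1 : ℝ) + d2) * Real.exp (-(t ^ 2 / 2) / D) := by positivity
  -- At `t = 0` the remainder probability already equals one.
  rcases ht.eq_or_lt with rfl | ht0
  · have : {ω | (0 : ℝ) ≤ specNorm (rem ω)} = Set.univ :=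
      Set.eq_univ_of_forall fun ω => specNorm_nonneg _
    rw [this, probReal_univ] at hT2 ⊢
    refine measureReal_le_one.trans ?_
    linarith
  rcases (d1 + d2).eq_zero_or_pos with hd | hd
  · have h0 : ∀ A : Matrix (Fin d1) (Fin d2) ℝ, specNorm A ≤ 0 := fun A => by
      obtain ⟨rfl, rfl⟩ : d1 = 0 ∧ d2 = 0 := by omega
      rw [specNorm_eq, Subsingleton.elim A 0]
      exact (specNorm_eq (0 : Matrix (Fin 0) (Fin 0) ℝ)).symm.le.trans (by simp [specNorm, eucNorm])
    -- Empty matrices have norm zero, so the event is empty.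
    have : {ω | 6 * t ≤ specNorm (∑ i ∈ Finset.Icc (1 : ℤ) n, Matrix.of (Ξn (X i ω)))} = ∅ := by
      refine Set.eq_empty_of_forall_notMem fun ω hω => ?_
      have h1 : 6 * t ≤ _ := hω
      linarith [h0 (∑ i ∈ Finset.Icc (1 : ℤ) n, Matrix.of (Ξn (X i ω)))]
    rw [this, measureReal_empty]
    positivity
  have hd' : (1 : ℝ) ≤ (d1 : ℝ) + d2 := by exact_mod_cast hd
  -- When the denominator vanishes, division by zero makes the exponential equal to one.
  rcases hD0.eq_or_lt with hDz | hDpos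
  · rw [← hDz, div_zero, Real.exp_zero]
    refine measureReal_le_one.trans ?_
    linarith
  have hmem : ∀ i ∈ Finset.Icc (1 : ℤ) q, i ∈ Finset.Icc (1 : ℤ) n := fun i hi => by
    rw [Finset.mem_Icc] at hi ⊢
    omega
  -- This value keeps `θ q R ≤ 1` and makes the Laplace exponent at level `2 t` at most
  -- `-(2/3 - 1/9) t² / D`, more than is needed.
  set θ := t / (3 * D) with hθ
  have hθ0 : 0 ≤ θ := by positivity
  have hclass : ∀ (p : ℤ) (j : ℕ), j * q ≤ n →
      P.real {ω | 2 * t ≤ specNorm (Matrix.of (altSum Ξn q p j fun i => X i ω))}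
        ≤ j * processBeta P X q + (d1 + d2) * Real.exp (-(t ^ 2 / 2) / D) := fun p j hj => by
    obtain ⟨e1, e2⟩ := exponent_le (j := j) hn0 hq0.le hs2 hR0 ht (by exact_mod_cast hj) hD
      hDpos hθ
    refine (altSum_tail P X hXmeas hstat Ξn hΞmeas R hR hmean q s2 hs2
      (fun i hi j hj => (le_max_left _ _).trans (hs2ub i (hmem i hi) j (hmem j hj)))
      (fun i hi j hj => (le_max_right _ _).trans (hs2ub i (hmem i hi) j (hmem j hj)))
      hβ hd θ hθ0 e1 p j (2 * t)).trans ?_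
    gcongr
  have hsub : {ω | 6 * t ≤ specNorm (∑ i ∈ Finset.Icc (1 : ℤ) n, Matrix.of (Ξn (X i ω)))}
      ⊆ ({ω | 2 * t ≤ specNorm (Matrix.of (altSum Ξn q 0 ((n / q + 1) / 2) fun i => X i ω))}
        ∪ {ω | 2 * t ≤ specNorm (Matrix.of (altSum Ξn q q (n / q / 2) fun i => X i ω))})
        ∪ {ω | t ≤ specNorm (rem ω)} := by
    intro ω hω
    have h1 : 6 * t ≤ specNorm (∑ i ∈ Finset.Icc (1 : ℤ) n, Matrix.of (Ξn (X i ω))) := hω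
    have h2 : ∑ i ∈ Finset.Icc (1 : ℤ) n, Matrix.of (Ξn (X i ω))
        = Matrix.of (altSum Ξn q 0 ((n / q + 1) / 2) fun i => X i ω)
          + Matrix.of (altSum Ξn q q (n / q / 2) fun i => X i ω) + rem ω := by
      simp only [hrem, ← of_sum]
      rw [sum_Icc_eq_altSum Ξn n q fun i => X i ω]
      rfl
    have h3 := h2 ▸ (specNorm_add_le (Matrix.of (altSum Ξn q 0 ((n / q + 1) / 2) fun i => X i ω)
          + Matrix.of (altSum Ξn q q (n / q / 2) fun i => X i ω)) (rem ω))
    have h4 := specNorm_add_le (Matrix.of (altSum Ξn q 0 ((n / q + 1) / 2) fun i => X i ω))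
          (Matrix.of (altSum Ξn q q (n / q / 2) fun i => X i ω))
    by_contra hcon
    simp only [Set.mem_union, Set.mem_ofPred_eq, not_or, not_le] at hcon
    linarith [hcon.1.1, hcon.1.2, hcon.2]
  have hcount : (n / q + 1) / 2 + n / q / 2 = n / q := by omega
  have hmn : n / q * q ≤ n := Nat.div_mul_le_self n q
  have hc0 : (n / q + 1) / 2 ≤ n / q := Nat.le.intro hcount
  have hc1 : n / q / 2 ≤ n / q := Nat.div_le_self _ _
  have b0 := hclass 0 ((n / q + 1) / 2) ((Nat.mul_le_mul_right q hc0).trans hmn)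
  have b1 := hclass q (n / q / 2) ((Nat.mul_le_mul_right q hc1).trans hmn)
  have hcost : (((n / q + 1) / 2 : ℕ) : ℝ) * processBeta P X q
      + ((n / q / 2 : ℕ) : ℝ) * processBeta P X q ≤ n / q * processBeta P X q := by
    rw [← add_mul, ← Nat.cast_add, hcount]
    gcongr
    exact Nat.cast_div_le
  have u := (measureReal_mono hsub).trans ((measureReal_union_le _ _).trans
    (add_le_add_left (measureReal_union_le (μ := P) _ _) _))
  linarith
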